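/- arXiv:1512.01160 — 2 statements merged into one kernel-verified Lean document; each statement's English description precedes it below -/
import Mathlib

section
/- Let L > 0, 0 < α ≤ 1, and consider the elongated torus T²_α = (0, L/α) × (0, L). Let v_1, …, v_m : ℝ² → ℝ² be C¹ vector fields, periodic with period L/α in x_1 and period L in x_2, with div v_j = 0 on ℝ², with ∫_0^L v_j(x_1, t) dt = 0 for every x_1 and every j, and orthonormal in L²(T²_α; ℝ²), i.e. ∫_{T²_α} ⟨v_i(x), v_j(x)⟩ dx = δ_{ij}. Then ρ(x) := ∑_{j=1}^m |v_j(x)|² satisfies ∫_{T²_α} ρ(x)² dx ≤ (π/6) ∑_{j=1}^m ∫_{T²_α} |∇v_j(x)|² dx, with constant π/6 independent of α. -/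
open Real MeasureTheory

/-- Partial derivative with respect to the first variable. -/
noncomputable def pd1 (f : ℝ × ℝ → ℝ) (x : ℝ × ℝ) : ℝ :=
  deriv (fun s => f (s, x.2)) x.1

/-- Partial derivative with respect to the second variable. -/
noncomputable def pd2 (f : ℝ × ℝ → ℝ) (x : ℝ × ℝ) : ℝ :=
  deriv (fun t => f (x.1, t)) x.2

/-- `|∇v|² = ∑_{i,k=1}^2 (∂_i v^k)²` for a vector field `v : ℝ² → ℝ²`. -/
noncomputable def gradSq (v : ℝ × ℝ → ℝ × ℝ) (x : ℝ × ℝ) : ℝ :=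
  pd1 (fun y => (v y).1) x ^ 2 + pd2 (fun y => (v y).1) x ^ 2 +
    pd1 (fun y => (v y).2) x ^ 2 + pd2 (fun y => (v y).2) x ^ 2

noncomputable section RuminAux
open Complex (I)
def en (T : ℝ) (n : ℤ) (t : ℝ) : ℂ := (((√T)⁻¹ : ℝ) : ℂ) * Complex.exp (-(2 * π * I * n * t / T))

lemma en_cont (T : ℝ) (n : ℤ) : Continuous (en T n) := by
  unfold en; fun_prop

lemma en_norm (T : ℝ) (n : ℤ) (t : ℝ) : ‖en T n t‖ = (√T)⁻¹ := by
  unfold en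
  have : (-(2 * π * I * n * t / T) : ℂ) = ((-(2 * π * n * t / T) : ℝ) : ℂ) * I := by
    push_cast; ring
  rw [norm_mul, this, Complex.norm_exp_ofReal_mul_I, Complex.norm_real, mul_one, norm_eq_abs,
    abs_of_nonneg (by positivity)]

def c1 (T : ℝ) (n : ℤ) (g : ℝ → ℂ) : ℂ := ∫ t in (0:ℝ)..T, en T n t * g t

lemma parseval1 {T : ℝ} (hT : 0 < T) (g : ℝ → ℂ) (hg : Continuous g) :
    ∫⁻ t in Set.Ioc 0 T, ‖g t‖ₑ ^ 2 = ∑' n : ℤ, ‖c1 T n g‖ₑ ^ 2 := by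
  have h2 : MemLp g 2 (volume.restrict (Set.Ioc 0 T)) :=
    MemLp.mono_measure (Measure.restrict_mono Set.Ioc_subset_Icc_self le_rfl)
      ((memLp_two_iff_integrable_sq_norm hg.aestronglyMeasurable).2
        ((by fun_prop : Continuous fun t => ‖g t‖ ^ 2).continuousOn.integrableOn_compact isCompact_Icc))
  have hs := hasSum_sq_fourierCoeffOn hT h2
  have hc : ∀ n : ℤ, ‖c1 T n g‖ ^ 2 = T * ‖fourierCoeffOn hT g n‖ ^ 2 := by
    intro n
    rw [fourierCoeffOn_eq_integral]
    have : c1 T n g = (((√T)⁻¹ : ℝ) : ℂ) * ∫ x in (0:ℝ)..T, fourier (-n) (x : AddCircle (T - 0)) • g x := by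
      unfold c1
      rw [← intervalIntegral.integral_const_mul]
      congr 1; ext t
      rw [fourier_coe_apply, en, smul_eq_mul, mul_assoc]
      congr 3
      push_cast; simp; ring
    rw [this, norm_mul, norm_smul, Complex.norm_real, norm_eq_abs, norm_eq_abs, mul_pow, mul_pow, sq_abs, sq_abs,
      inv_pow, sq_sqrt hT.le, sub_zero]
    field_simp
  have hs2 : HasSum (fun n : ℤ => ‖c1 T n g‖ ^ 2) (∫ t in Set.Ioc 0 T, ‖g t‖ ^ 2) := by
    have := hs.mul_left T
    simp_rw [hc]
    rw [intervalIntegral.integral_of_le hT.le, smul_eq_mul, sub_zero, mul_inv_cancel_left₀ hT.ne'] at this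
    exact this
  have hi : Integrable (fun t => ‖g t‖ ^ 2) (volume.restrict (Set.Ioc 0 T)) :=
    (memLp_two_iff_integrable_sq_norm h2.1).1 h2
  have e : ∀ z : ℂ, ‖z‖ₑ ^ 2 = ENNReal.ofReal (‖z‖ ^ 2) := by
    intro z; rw [ENNReal.ofReal_pow (norm_nonneg _), ofReal_norm]
  simp_rw [e]
  rw [← ofReal_integral_eq_lintegral_ofReal hi (Filter.Eventually.of_forall fun _ => by positivity), ← hs2.tsum_eq,
    ENNReal.ofReal_tsum_of_nonneg (fun _ => by positivity) hs2.summable]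

def QQ (A L : ℝ) : Set (ℝ × ℝ) := Set.Ioc (0:ℝ) A ×ˢ Set.Ioc (0:ℝ) L

def cf (A L : ℝ) (k : ℤ × ℤ) (f : ℝ × ℝ → ℂ) : ℂ := c1 A k.1 fun s => c1 L k.2 fun t => f (s, t)

lemma c1_cont (T : ℝ) (n : ℤ) (f : ℝ × ℝ → ℂ) (hf : Continuous f) :
    Continuous fun s => c1 T n fun t => f (s, t) := by
  unfold c1
  have := en_cont T n
  apply intervalIntegral.continuous_parametric_intervalIntegral_of_continuous'
  fun_prop

lemma vol_restrict (A L : ℝ) : (volume.restrict (QQ A L) : Measure (ℝ × ℝ)) =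
    (volume.restrict (Set.Ioc 0 A)).prod (volume.restrict (Set.Ioc 0 L)) := by
  rw [Measure.prod_restrict, QQ, Measure.volume_eq_prod]

lemma parseval {A L : ℝ} (hA : 0 < A) (hL : 0 < L) (f : ℝ × ℝ → ℂ) (hf : Continuous f) :
    ∫⁻ x in QQ A L, ‖f x‖ₑ ^ 2 = ∑' k : ℤ × ℤ, ‖cf A L k f‖ₑ ^ 2 := by
  rw [vol_restrict, lintegral_prod _ (by fun_prop)]
  have : ∀ s : ℝ, ∫⁻ t in Set.Ioc 0 L, ‖f (s, t)‖ₑ ^ 2 = ∑' n : ℤ, ‖c1 L n fun t => f (s, t)‖ₑ ^ 2 := 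
    fun s => parseval1 hL (fun t => f (s,t)) (by fun_prop)
  simp_rw [this]
  rw [lintegral_tsum (fun n => ((c1_cont L n f hf).measurable.enorm.pow_const 2).aemeasurable)]
  rw [ENNReal.tsum_prod', ENNReal.tsum_comm]
  congr 1; ext n
  rw [parseval1 hA _ (c1_cont L n f hf)]
  rfl

lemma int_Q {f : ℝ × ℝ → ℂ} (A L : ℝ) (hf : Continuous f) : IntegrableOn f (QQ A L) :=
  IntegrableOn.mono_set (hf.continuousOn.integrableOn_compact (isCompact_Icc.prod isCompact_Icc))
    (Set.prod_mono Set.Ioc_subset_Icc_self Set.Ioc_subset_Icc_self)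

def Ek (A L : ℝ) (k : ℤ × ℤ) (x : ℝ × ℝ) : ℂ := en A k.1 x.1 * en L k.2 x.2

lemma Ek_cont (A L : ℝ) (k : ℤ × ℤ) : Continuous (Ek A L k) := by
  have := en_cont A k.1
  have := en_cont L k.2
  unfold Ek; fun_prop

lemma Ek_norm {A L : ℝ} (hA : 0 < A) (hL : 0 < L) (k : ℤ × ℤ) (x : ℝ × ℝ) :
    ‖Ek A L k x‖ ^ 2 = (A * L)⁻¹ := by
  rw [Ek, norm_mul, en_norm, en_norm, mul_pow, inv_pow, inv_pow, sq_sqrt hA.le, sq_sqrt hL.le, mul_inv]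

lemma cf_eq {A L : ℝ} (hA : 0 < A) (hL : 0 < L) (k : ℤ × ℤ) {f : ℝ × ℝ → ℂ} (hf : Continuous f) :
    cf A L k f = ∫ x in QQ A L, Ek A L k x * f x := by
  have hi : IntegrableOn (fun x => Ek A L k x * f x) (QQ A L) := int_Q A L ((Ek_cont A L k).mul hf)
  rw [IntegrableOn, vol_restrict] at hi
  rw [vol_restrict, integral_prod _ hi]
  unfold cf c1 Ek
  rw [intervalIntegral.integral_of_le hA.le]
  congr 1; ext s
  dsimp only
  rw [intervalIntegral.integral_of_le hL.le, ← integral_const_mul]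
  congr 1; ext t; ring

lemma cf_eq_swap {A L : ℝ} (hA : 0 < A) (hL : 0 < L) (k : ℤ × ℤ) {f : ℝ × ℝ → ℂ} (hf : Continuous f) :
    cf A L k f = c1 L k.2 fun t => c1 A k.1 fun s => f (s, t) := by
  rw [cf_eq hA hL k hf]
  have hi : IntegrableOn (fun x => Ek A L k x * f x) (QQ A L) := int_Q A L ((Ek_cont A L k).mul hf)
  rw [IntegrableOn, vol_restrict] at hi
  rw [vol_restrict, integral_prod_symm _ hi]
  unfold c1 Ek
  rw [intervalIntegral.integral_of_le hL.le]
  congr 1; ext s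
  dsimp only
  rw [intervalIntegral.integral_of_le hA.le, ← integral_const_mul]
  congr 1; ext t; ring

lemma en_per {T : ℝ} (hT : 0 < T) (n : ℤ) : en T n T = en T n 0 := by
  unfold en
  congr 1
  have : (T:ℂ) ≠ 0 := by exact_mod_cast hT.ne'
  rw [show (-(2 * π * I * n * T / T) : ℂ) = (-n : ℤ) * (2 * π * I) by push_cast; field_simp,
    Complex.exp_int_mul_two_pi_mul_I]
  simp

lemma en_deriv (T : ℝ) (n : ℤ) (t : ℝ) :
    HasDerivAt (en T n) (-(2 * π * I * n / T) * en T n t) t := by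
  unfold en
  have h : HasDerivAt (fun t : ℝ => (-(2 * π * I * n * t / T) : ℂ)) (-(2 * π * I * n / T)) t := by
    have h0 : HasDerivAt (fun t : ℝ => (t : ℂ)) 1 t := Complex.ofRealCLM.hasDerivAt
    have h1 := h0.const_mul (-(2 * π * I * n / T) : ℂ)
    rw [mul_one] at h1
    refine h1.congr_of_eventuallyEq (Filter.Eventually.of_forall fun y => ?_)
    ring
  have h2 := (h.cexp.const_mul ((((√T)⁻¹ : ℝ) : ℂ)))
  refine h2.congr_deriv ?_
  ring

lemma c1_deriv {T : ℝ} (hT : 0 < T) (n : ℤ) (g g' : ℝ → ℂ) (hg : ∀ t, HasDerivAt g (g' t) t)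
    (hg' : Continuous g') (hp : g T = g 0) :
    c1 T n g' = (2 * π * I * n / T) * c1 T n g := by
  unfold c1
  have hc := en_cont T n
  rw [intervalIntegral.integral_mul_deriv_eq_deriv_mul (u := en T n) (v := g) (fun x _ => en_deriv T n x) (fun x _ => hg x)
   (by apply Continuous.intervalIntegrable; fun_prop) (by apply Continuous.intervalIntegrable; fun_prop), hp, en_per hT,
   sub_self, zero_sub, ← intervalIntegral.integral_neg, ← intervalIntegral.integral_const_mul]
  congr 1; ext t; ring

lemma cf_d1 {A L : ℝ} (hA : 0 < A) (hL : 0 < L) (k : ℤ × ℤ) (f f' : ℝ × ℝ → ℂ) (hf : Continuous f) (hf' : Continuous f')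
    (hd : ∀ s t, HasDerivAt (fun s => f (s, t)) (f' (s, t)) s) (hp : ∀ t, f (A, t) = f (0, t)) :
    cf A L k f' = (2 * π * I * k.1 / A) * cf A L k f := by
  rw [cf_eq_swap hA hL k hf', cf_eq_swap hA hL k hf]
  have : ∀ t, (c1 A k.1 fun s => f' (s, t)) = (2 * π * I * k.1 / A) * c1 A k.1 fun s => f (s, t) :=
    fun t => c1_deriv hA k.1 _ _ (fun s => hd s t) (by fun_prop) (hp t)
  simp_rw [this]
  rw [c1, c1, ← intervalIntegral.integral_const_mul]
  congr 1; ext t; ring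

lemma cf_d2 {A L : ℝ} (hL : 0 < L) (k : ℤ × ℤ) (f f' : ℝ × ℝ → ℂ) (hf' : Continuous f')
    (hd : ∀ s t, HasDerivAt (fun t => f (s, t)) (f' (s, t)) t) (hp : ∀ s, f (s, L) = f (s, 0)) :
    cf A L k f' = (2 * π * I * k.2 / L) * cf A L k f := by
  unfold cf
  have : ∀ s, (c1 L k.2 fun t => f' (s, t)) = (2 * π * I * k.2 / L) * c1 L k.2 fun t => f (s, t) :=
    fun s => c1_deriv hL k.2 _ _ (fun t => hd s t) (by fun_prop) (hp s)
  simp_rw [this]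
  rw [c1, c1, ← intervalIntegral.integral_const_mul]
  congr 1; ext t; ring

lemma c1_en {T : ℝ} (hT : 0 < T) (n l : ℤ) :
    c1 T n (fun t => (starRingEnd ℂ) (en T l t)) = if n = l then 1 else 0 := by
  have hT' : (T:ℂ) ≠ 0 := by exact_mod_cast hT.ne'
  have key : ∀ t : ℝ, en T n t * (starRingEnd ℂ) (en T l t) = (T:ℂ)⁻¹ * Complex.exp ((2 * π * I * (l - n) / T) * t) := by
    intro t
    unfold en
    rw [map_mul, Complex.conj_ofReal, ← Complex.exp_conj]
    rw [show ∀ a b c d : ℂ, a * b * (c * d) = (a * c) * (b * d) by intros; ring, ← Complex.exp_add, ← Complex.ofReal_mul,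
      ← mul_inv, mul_self_sqrt hT.le, Complex.ofReal_inv]
    congr 2
    have : (starRingEnd ℂ) 2 = 2 := Complex.conj_ofReal 2
    simp [this]
    ring
  unfold c1
  simp_rw [key]
  rw [intervalIntegral.integral_const_mul]
  split_ifs with h
  · subst h
    simp [hT']
  · have hne : (2 * π * I * (l - n) / T : ℂ) ≠ 0 := by
      have : (l - n : ℂ) ≠ 0 := by
        rw [sub_ne_zero]; exact_mod_cast (Ne.symm h)
      simp [this, hT', Real.pi_ne_zero]
    rw [integral_exp_mul_complex hne]
    rw [show (2 * π * I * (l - n) / T * T: ℂ) = (l - n : ℤ) * (2 * π * I) by push_cast; field_simp,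
    Complex.exp_int_mul_two_pi_mul_I]
    simp

lemma cf_Ek {A L : ℝ} (hA : 0 < A) (hL : 0 < L) (k l : ℤ × ℤ) :
    cf A L k (fun x => (starRingEnd ℂ) (Ek A L l x)) = if k = l then 1 else 0 := by
  unfold cf Ek
  have h : ∀ s, (c1 L k.2 fun t => (starRingEnd ℂ) (en A l.1 s * en L l.2 t)) =
      (starRingEnd ℂ) (en A l.1 s) * if k.2 = l.2 then 1 else 0 := by
    intro s
    rw [← c1_en hL, c1, c1, ← intervalIntegral.integral_const_mul]
    congr 1; ext t; simp; ring
  simp_rw [h]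
  by_cases h2 : k.2 = l.2
  · simp only [h2, if_true, mul_one]
    rw [c1_en hA]
    simp [Prod.ext_iff, h2]
  · simp [h2, c1, Prod.ext_iff]

lemma trap {g : ℝ → ℝ} {a b : ℝ} (hab : a ≤ b) (hg : ConcaveOn ℝ (Set.Icc a b) g) (hc : ContinuousOn g (Set.Icc a b)) :
    (b - a) * (g a + g b) / 2 ≤ ∫ x in a..b, g x := by
  rcases hab.eq_or_lt with rfl | h
  · simp
  have h1 : ∫ x in a..b, (g a + (x - a) * ((g b - g a) / (b - a))) = (b - a) * (g a + g b) / 2 := by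
    have hb : b - a ≠ 0 := by linarith
    rw [intervalIntegral.integral_add (by simp) (by apply Continuous.intervalIntegrable; fun_prop),
      intervalIntegral.integral_mul_const]
    simp
    field_simp
    ring
  rw [← h1]
  apply intervalIntegral.integral_mono_on hab
  · apply Continuous.intervalIntegrable; fun_prop
  · apply ContinuousOn.intervalIntegrable; rwa [Set.uIcc_of_le hab]
  · intro x hx
    have hb : 0 < b - a := by linarith
    have := hg.2 (Set.left_mem_Icc.2 hab) (Set.right_mem_Icc.2 hab) 
      (div_nonneg (by linarith [hx.2]) hb.le : 0 ≤ (b - x)/(b-a)) (div_nonneg (by linarith [hx.1]) hb.le : 0 ≤ (x-a)/(b-a)) (by field_simp; ring)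
    simp only [smul_eq_mul] at this
    have e : (b - x) / (b - a) * a + (x - a) / (b - a) * b = x := by field_simp; ring
    rw [e] at this
    refine le_trans (le_of_eq ?_) this
    field_simp; ring

lemma quarter {R : ℝ} (hR : 0 < R) : ∫ x in (0:ℝ)..R, √(R^2 - x^2) = π * R^2 / 4 := by
  have h1 : ∫ x in (0:ℝ)..1, √(1 - x ^ 2 : ℝ) = π / 4 := by
    have h := integral_sqrt_one_sub_sq
    have hii : ∀ a b : ℝ, IntervalIntegrable (fun x : ℝ => √(1 - x^2)) volume a b := fun a b => by
      apply Continuous.intervalIntegrable; fun_prop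
    rw [← intervalIntegral.integral_add_adjacent_intervals (hii (-1) 0) (hii 0 1)] at h
    have h2 := intervalIntegral.integral_comp_neg (a := 0) (b := 1) (fun x : ℝ => √(1 - x^2))
    simp at h2
    rw [← h2] at h
    linarith
  have h2 := intervalIntegral.integral_comp_mul_left (a := 0) (b := 1) (fun x : ℝ => √(R^2 - x^2)) hR.ne'
  simp only [mul_zero, mul_one, smul_eq_mul] at h2
  have h3 : ∀ x : ℝ, √(R^2 - (R*x)^2) = R * √(1-x^2) := by
    intro x
    rw [show R^2 - (R*x)^2 = R^2 * (1 - x^2) by ring, sqrt_mul (by positivity), sqrt_sq hR.le]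
  simp_rw [h3] at h2
  rw [intervalIntegral.integral_const_mul, h1] at h2
  field_simp at h2
  linarith

lemma conc (R : ℝ) : ConcaveOn ℝ (Set.Icc 0 R) (fun x => √(R^2 - x^2)) := by
  refine ⟨convex_Icc _ _, ?_⟩
  intro x hx y hy a b ha hb hab
  simp only [smul_eq_mul]
  apply le_sqrt_of_sq_le
  have hx' : 0 ≤ R^2 - x^2 := by nlinarith [hx.1, hx.2]
  have hy' : 0 ≤ R^2 - y^2 := by nlinarith [hy.1, hy.2]
  have h1 := sq_sqrt hx'
  have h2 := sq_sqrt hy'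
  obtain rfl : b = 1 - a := by linarith
  have h3 : √(R^2 - x^2) * √(R^2 - y^2) ≤ R^2 - x * y := by
    rw [← sqrt_mul hx']
    apply sqrt_le_iff.2 ⟨by nlinarith [hx.1, hx.2, hy.1, hy.2, mul_nonneg hx.1 (sub_nonneg.2 hy.2)], ?_⟩
    nlinarith [mul_nonneg (sq_nonneg R) (sq_nonneg (x - y))]
  nlinarith [mul_nonneg ha hb]

lemma sum_bound {R : ℝ} (hR : 0 < R) (n : ℕ) (hn : (n:ℝ) ≤ R) :
    ∑ k ∈ Finset.range n, √(R^2 - ((k:ℝ)+1)^2) + R / 2 - √(R^2 - n^2) / 2 + (R - n) * √(R^2 - n^2) / 2 ≤ π * R^2/4 := by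
  rw [← quarter hR]
  have hii : ∀ a b : ℝ, IntervalIntegrable (fun x : ℝ => √(R^2 - x^2)) volume a b := fun a b => by
      apply Continuous.intervalIntegrable; fun_prop
  have main : ∀ j : ℕ, j ≤ n → ∑ k ∈ Finset.range j, √(R^2 - ((k:ℝ)+1)^2) + R / 2 - √(R^2 - j^2) / 2 ≤ ∫ x in (0:ℝ)..j, √(R^2 - x^2) := by
    intro j
    induction j with
    | zero => intro _; simp [sqrt_sq hR.le]
    | succ j ih =>
      intro hj
      have hj' : (j:ℝ) + 1 ≤ R := by
        have : ((j+1:ℕ):ℝ) ≤ n := by exact_mod_cast hj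
        push_cast at this; linarith
      rw [Finset.sum_range_succ, ← intervalIntegral.integral_add_adjacent_intervals (hii 0 j) (hii j _)]
      have := trap (g := fun x => √(R^2 - x^2)) (a := j) (b := (j+1:ℕ)) (by simp) ((conc R).subset (Set.Icc_subset_Icc (by positivity) (by push_cast; linarith)) (convex_Icc _ _)) (by fun_prop)
      have := ih (by omega)
      push_cast at *
      linarith
  rw [← intervalIntegral.integral_add_adjacent_intervals (hii 0 n) (hii n _)]
  have h1 := main n le_rfl
  have := trap (g := fun x => √(R^2 - x^2)) (a := n) (b := R) hn ((conc R).subset (Set.Icc_subset_Icc (by positivity) le_rfl) (convex_Icc _ _)) (by fun_prop)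
  simp only [sub_self, sqrt_zero, add_zero] at this
  linarith

lemma sum_bound2 {R : ℝ} (hR : 0 < R) (n : ℕ) (hn : (n:ℝ) ≤ R) (hn' : R < n + 1) :
    ∑ k ∈ Finset.range n, (4 * √(R^2 - ((k:ℝ)+1)^2) + 2) ≤ π ^ 3 / 9 * R^2 := by
  have hpi : π + 0.3 ≤ π^3/9 := by
    nlinarith [pi_gt_d4, mul_pos pi_pos pi_pos, mul_pos (mul_pos pi_pos pi_pos) pi_pos, sq_nonneg (π - 3.1415)]
  have hgoal : (π + 0.3) * R^2 ≤ π^3/9 * R^2 := by gcongr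
  refine le_trans ?_ hgoal
  have hb := sum_bound hR n hn
  rw [Finset.sum_add_distrib, ← Finset.mul_sum]
  simp only [Finset.sum_const, Finset.card_range, nsmul_eq_mul]
  rcases n with _ | _ | n
  · simp; positivity
  · simp at hn hn' ⊢
    have h0 := sq_sqrt (show 0 ≤ R^2 - 1 by nlinarith)
    set s := √(R^2 - 1)
    nlinarith [pi_gt_d4, sq_nonneg (s - 0.58)]
  · push_cast at *
    set N : ℝ := (n:ℝ) + 1 + 1 with hN
    have hN2 : 2 ≤ N := by have : (0:ℝ) ≤ n := by positivity
                           linarith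
    set S := ∑ k ∈ Finset.range (n+1+1), √(R^2 - ((k:ℝ)+1)^2)
    have h0 := sq_sqrt (show 0 ≤ R^2 - N^2 by nlinarith)
    have hg0 := sqrt_nonneg (R^2 - N^2)
    set g := √(R^2 - N^2)
    set t := R - N with ht
    have htr : N = R - t := by rw [ht]; ring
    have ht0 : 0 ≤ t := by linarith
    have ht1 : t < 1 := by linarith
    suffices 2 * (1 - t) * g ≤ 2 * t + 0.3 * R^2 by nlinarith
    have hg2 : g^2 = t * (2 * R - t) := by rw [h0, htr]; ring
    refine abs_le_of_sq_le_sq' ?_ (by positivity) |>.2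
    have hq : (1-t)^2 * t ≤ 4/27 := by nlinarith [mul_nonneg (sq_nonneg (3 * t - 1)) (show 0 ≤ 4 - 3 * t by linarith)]
    rw [mul_pow, hg2]
    have hR2 : R^2 = (N+t)^2 := by rw [htr]; ring
    rcases n with _ | n
    · have hN' : N = 2 := by rw [hN]; norm_num
      have : R = 2 + t := by linarith
      rw [this]
      have e1 : (2 * t + 1.2)^2 ≤ (2 * t + 0.3 * (2 + t)^2)^2 := by
        gcongr; nlinarith
      refine le_trans ?_ e1
      nlinarith [sq_nonneg (t - 1/3), sq_nonneg (t*(1-t)), mul_nonneg ht0 (sub_nonneg.2 ht1.le)]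
    · have hR3 : 3 ≤ R := by
        have : (0:ℝ) ≤ n := by positivity
        push_cast at hN; linarith
      have e1 : (2 * (1-t))^2 * (t * (2 * R - t)) ≤ 4 * (4/27) * (2 * R) := by
        have : (2 * (1-t))^2 * (t * (2 * R - t)) ≤ 4 * ((1-t)^2 * t) * (2 * R) := by
          nlinarith [mul_nonneg (sq_nonneg (1-t)) (mul_nonneg ht0 ht0)]
        nlinarith
      have e2 : (0.3 * R^2)^2 ≤ (2 * t + 0.3 * R^2)^2 := by
        gcongr; linarith
      refine le_trans e1 (le_trans ?_ e2)
      have : (3:ℝ)^3 ≤ R^3 := by gcongr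
      nlinarith [mul_le_mul_of_nonneg_left this hR.le]

def KK (α R : ℝ) : Finset (ℤ × ℤ) :=
  (Finset.Icc (-⌊R / α⌋) ⌊R / α⌋ ×ˢ Finset.Icc (-⌊R⌋) ⌊R⌋).filter
    fun k => k.2 ≠ 0 ∧ α^2 * (k.1:ℝ)^2 + (k.2:ℝ)^2 ≤ R^2

lemma mem_KK {α R : ℝ} (hα : 0 < α) (hR : 0 < R) (k : ℤ × ℤ) :
    k ∈ KK α R ↔ k.2 ≠ 0 ∧ α^2 * (k.1:ℝ)^2 + (k.2:ℝ)^2 ≤ R^2 := by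
  unfold KK
  rw [Finset.mem_filter, and_iff_right_iff_imp]
  rintro ⟨-, h⟩
  have h1 : |α * (k.1:ℝ)| ≤ R := abs_le_of_sq_le_sq (by nlinarith [sq_nonneg (k.2:ℝ)]) hR.le
  have h2 : |(k.2:ℝ)| ≤ R := abs_le_of_sq_le_sq (by nlinarith [sq_nonneg (α * (k.1:ℝ))]) hR.le
  rw [abs_le] at h1 h2
  simp only [Finset.mem_product, Finset.mem_Icc]
  refine ⟨⟨?_, ?_⟩, ?_, ?_⟩
  · rw [neg_le, Int.le_floor, le_div_iff₀ hα]; push_cast; linarith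
  · rw [Int.le_floor, le_div_iff₀ hα]; linarith
  · rw [neg_le, Int.le_floor]; push_cast; linarith
  · rw [Int.le_floor]; linarith

lemma card_KK {α R : ℝ} (hα : 0 < α) (hα1 : α ≤ 1) (hR : 0 < R) :
    (KK α R).card * α ≤ π^3/9 * R^2 := by
  set n := ⌊R⌋₊ with hn
  have hnR : (n:ℝ) ≤ R := Nat.floor_le hR.le
  refine le_trans ?_ (sum_bound2 hR n hnR (Nat.lt_floor_add_one R))
  set m : ℕ → ℤ := fun j => ⌊√(R^2 - ((j:ℝ)+1)^2) / α⌋ with hm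
  have hm0 : ∀ j, 0 ≤ m j := fun j => Int.floor_nonneg.2 (by positivity)
  have hsub : KK α R ⊆ (Finset.range n).biUnion fun j =>
      Finset.Icc (-(m j)) (m j) ×ˢ ({(j:ℤ)+1, -((j:ℤ)+1)} : Finset ℤ) := by
    intro k hk
    rw [mem_KK hα hR] at hk
    obtain ⟨h0, h⟩ := hk
    have h2 : |(k.2:ℝ)| ≤ R := abs_le_of_sq_le_sq (by nlinarith [sq_nonneg (α * (k.1:ℝ))]) hR.le
    have h3 : k.2.natAbs ≤ n := by
      rw [hn, Nat.le_floor_iff hR.le, Nat.cast_natAbs]; push_cast; exact h2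
    have h4 : ((k.2.natAbs - 1 : ℕ):ℤ) + 1 = |k.2| := by rw [Int.abs_eq_natAbs]; omega
    have h5 : (((k.2.natAbs - 1 : ℕ):ℝ) + 1)^2 = (k.2:ℝ)^2 := by
      have : (((k.2.natAbs - 1 : ℕ):ℝ) + 1) = |(k.2:ℝ)| := by exact_mod_cast h4
      rw [this, sq_abs]
    have h6 : |(k.1:ℝ)| ≤ √(R^2 - (((k.2.natAbs - 1 : ℕ):ℝ)+1)^2) / α := by
      rw [h5, le_div_iff₀ hα]
      apply le_sqrt_of_sq_le
      rw [mul_pow, sq_abs]; linarith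
    rw [abs_le] at h6
    simp only [Finset.mem_biUnion, Finset.mem_range, Finset.mem_product, Finset.mem_Icc, Finset.mem_insert, Finset.mem_singleton]
    refine ⟨k.2.natAbs - 1, by omega, ⟨?_, ?_⟩, by omega⟩
    · rw [neg_le, hm, Int.le_floor]; push_cast; linarith
    · rw [hm, Int.le_floor]; linarith
  have hc := (Finset.card_le_card hsub).trans Finset.card_biUnion_le
  have hc' : ((KK α R).card : ℝ) ≤ ∑ j ∈ Finset.range n, (2 * (m j : ℝ) + 1) * 2 := by
    refine le_trans (Nat.cast_le.2 hc) ?_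
    push_cast
    apply Finset.sum_le_sum
    intro j _
    rw [Finset.card_product]
    push_cast
    gcongr
    · rw [Int.card_Icc]
      have : (((m j + 1 - -m j).toNat : ℤ) : ℝ) = 2 * (m j:ℝ) + 1 := by
        rw [Int.toNat_of_nonneg (by linarith [hm0 j])]; push_cast; ring
      exact le_of_eq (by exact_mod_cast this)
    · exact_mod_cast Finset.card_le_two
  calc ((KK α R).card : ℝ) * α ≤ (∑ j ∈ Finset.range n, (2 * (m j : ℝ) + 1) * 2) * α := by gcongr
    _ = ∑ j ∈ Finset.range n, (2 * (m j : ℝ) + 1) * 2 * α := by rw [Finset.sum_mul]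
    _ ≤ _ := by
      apply Finset.sum_le_sum
      intro j _
      have : (m j : ℝ) ≤ √(R^2 - ((j:ℝ)+1)^2) / α := Int.floor_le _
      rw [le_div_iff₀ hα] at this
      linarith

def oc (f : ℝ × ℝ → ℝ) (x : ℝ × ℝ) : ℂ := (f x : ℂ)

lemma oc_cont {f : ℝ × ℝ → ℝ} (hf : Continuous f) : Continuous (oc f) := by
  unfold oc; fun_prop

lemma ofReal_sq_enorm (z : ℂ) : ENNReal.ofReal (‖z‖ ^ 2) = ‖z‖ₑ ^ 2 := by
  rw [ENNReal.ofReal_pow (norm_nonneg _), ofReal_norm]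

lemma int_QR {f : ℝ × ℝ → ℝ} (A L : ℝ) (hf : Continuous f) : IntegrableOn f (QQ A L) :=
  IntegrableOn.mono_set (hf.continuousOn.integrableOn_compact (isCompact_Icc.prod isCompact_Icc))
    (Set.prod_mono Set.Ioc_subset_Icc_self Set.Ioc_subset_Icc_self)

lemma bessel_fin {A L : ℝ} (hA : 0 < A) (hL : 0 < L) (K : Finset (ℤ × ℤ)) {f : ℝ × ℝ → ℂ} (hf : Continuous f) :
    ∑ k ∈ K, ‖cf A L k f‖ ^ 2 ≤ ∫ x in QQ A L, ‖f x‖ ^ 2 := by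
  have h0 : 0 ≤ ∫ x in QQ A L, ‖f x‖ ^ 2 := integral_nonneg fun _ => by positivity
  rw [← ENNReal.ofReal_le_ofReal_iff h0, ENNReal.ofReal_sum_of_nonneg (fun _ _ => by positivity),
    ofReal_integral_eq_lintegral_ofReal (int_QR A L (by fun_prop)) (Filter.Eventually.of_forall fun _ => by positivity)]
  simp_rw [ofReal_sq_enorm]
  rw [parseval hA hL f hf]
  exact ENNReal.sum_le_tsum K

lemma cf_sum {A L : ℝ} (hA : 0 < A) (hL : 0 < L) (k : ℤ × ℤ) {ι : Type*} (s : Finset ι) (c : ι → ℂ)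
    (f : ι → ℝ × ℝ → ℂ) (hf : ∀ i, Continuous (f i)) :
    cf A L k (fun x => ∑ i ∈ s, c i * f i x) = ∑ i ∈ s, c i * cf A L k (f i) := by
  rw [cf_eq hA hL k (by fun_prop)]
  simp_rw [cf_eq hA hL k (hf _), ← integral_const_mul]
  rw [← integral_finsetSum]
  · congr 1; ext x
    rw [Finset.mul_sum]
    exact Finset.sum_congr rfl fun i _ => by ring
  · intro i _
    have := Ek_cont A L k
    have := hf i
    exact int_Q A L (by fun_prop)

lemma cf_sub {A L : ℝ} (hA : 0 < A) (hL : 0 < L) (k : ℤ × ℤ) 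
    {f g : ℝ × ℝ → ℂ} (hf : Continuous f) (hg : Continuous g) :
    cf A L k (fun x => f x - g x) = cf A L k f - cf A L k g := by
  have := Ek_cont A L k
  rw [cf_eq hA hL k (by fun_prop), cf_eq hA hL k hf, cf_eq hA hL k hg, ← integral_sub]
  · congr 1; ext x; ring
  · exact int_Q A L (by fun_prop)
  · exact int_Q A L (by fun_prop)

lemma norm_comb {A L : ℝ} {m : ℕ} (u w : Fin m → ℝ × ℝ → ℝ)
    (hu : ∀ j, Continuous (u j)) (hw : ∀ j, Continuous (w j))
    (hort : ∀ i j, ∫ x in QQ A L, (u i x * u j x + w i x * w j x) = if i = j then 1 else 0)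
    (t : Fin m → ℂ) :
    (∫ x in QQ A L, ‖∑ j, t j * oc (u j) x‖ ^ 2) + (∫ x in QQ A L, ‖∑ j, t j * oc (w j) x‖ ^ 2)
      = ∑ j, ‖t j‖ ^ 2 := by
  have h1 := fun j => oc_cont (hu j)
  have h2 := fun j => oc_cont (hw j)
  rw [← integral_add (int_QR A L (by fun_prop)) (int_QR A L (by fun_prop))]
  apply Complex.ofReal_injective
  rw [← integral_complex_ofReal]
  have key : ∀ x, (((‖∑ j, t j * oc (u j) x‖ ^ 2 + ‖∑ j, t j * oc (w j) x‖ ^ 2 : ℝ)) : ℂ) =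
      ∑ i, ∑ j, (t i * (starRingEnd ℂ) (t j)) * ((u i x * u j x + w i x * w j x : ℝ) : ℂ) := by
    intro x
    push_cast
    rw [← Complex.mul_conj', ← Complex.mul_conj', map_sum, map_sum, Finset.sum_mul_sum, Finset.sum_mul_sum,
      ← Finset.sum_add_distrib]
    refine Finset.sum_congr rfl fun i _ => ?_
    rw [← Finset.sum_add_distrib]
    refine Finset.sum_congr rfl fun j _ => ?_
    simp only [oc, map_mul, Complex.conj_ofReal]
    ring
  simp_rw [key]
  have hc : ∀ i j, Continuous fun x => (t i * (starRingEnd ℂ) (t j)) * ((u i x * u j x + w i x * w j x : ℝ) : ℂ) := by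
    intro i j
    have := hu i; have := hu j; have := hw i; have := hw j
    fun_prop
  rw [integral_finsetSum _ (fun i _ => int_Q A L (continuous_finsetSum _ fun j _ => hc i j))]
  rw [Complex.ofReal_sum]
  refine Finset.sum_congr rfl fun i _ => ?_
  rw [integral_finsetSum _ (fun j _ => int_Q A L (hc i j))]
  simp_rw [integral_const_mul, integral_complex_ofReal, hort]
  rw [Finset.sum_eq_single i]
  · rw [if_pos rfl, Complex.mul_conj']; push_cast; ring
  · intro j _ hj
    rw [if_neg (Ne.symm hj)]; push_cast; ring
  · intro h; exact absurd (Finset.mem_univ i) h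

lemma bessel_op {A L : ℝ} (hA : 0 < A) (hL : 0 < L) {m : ℕ} (u w : Fin m → ℝ × ℝ → ℝ)
    (hu : ∀ j, Continuous (u j)) (hw : ∀ j, Continuous (w j))
    (hort : ∀ i j, ∫ x in QQ A L, (u i x * u j x + w i x * w j x) = if i = j then 1 else 0)
    (K : Finset (ℤ × ℤ)) (p q : ℤ × ℤ → ℝ) (hpq : ∀ k ∈ K, p k ^ 2 + q k ^ 2 = 1) (z : ℤ × ℤ → ℂ) :
    ∑ j, ‖∑ k ∈ K, z k * (p k * cf A L k (oc (u j)) + q k * cf A L k (oc (w j)))‖ ^ 2 ≤ ∑ k ∈ K, ‖z k‖ ^ 2 := by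
  set t : Fin m → ℂ := fun j => ∑ k ∈ K, z k * (p k * cf A L k (oc (u j)) + q k * cf A L k (oc (w j))) with ht
  change ∑ j, ‖t j‖ ^ 2 ≤ _
  set τ : Fin m → ℂ := fun j => (starRingEnd ℂ) (t j) with hτ
  set S := ∑ j, ‖t j‖ ^ 2 with hS
  have hS0 : 0 ≤ S := by positivity
  have h1 := fun j => oc_cont (hu j)
  have h2 := fun j => oc_cont (hw j)
  set U : ℝ × ℝ → ℂ := fun x => ∑ j, τ j * oc (u j) x with hU
  set W : ℝ × ℝ → ℂ := fun x => ∑ j, τ j * oc (w j) x with hW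
  have hUc : Continuous U := by fun_prop
  have hWc : Continuous W := by fun_prop
  have hn : (∫ x in QQ A L, ‖U x‖ ^ 2) + (∫ x in QQ A L, ‖W x‖ ^ 2) = S := by
    rw [hU, hW, norm_comb u w hu hw hort τ]
    simp [hτ, hS]
  have hcU : ∀ k, cf A L k U = ∑ j, τ j * cf A L k (oc (u j)) := fun k => cf_sum hA hL k _ τ _ h1
  have hcW : ∀ k, cf A L k W = ∑ j, τ j * cf A L k (oc (w j)) := fun k => cf_sum hA hL k _ τ _ h2
  have hSe : (S : ℂ) = ∑ k ∈ K, z k * (p k * cf A L k U + q k * cf A L k W) := by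
    simp_rw [hcU, hcW]
    rw [hS]
    push_cast
    have : ∀ j, ((‖t j‖ ^ 2 : ℂ)) = ∑ k ∈ K, τ j * (z k * (p k * cf A L k (oc (u j)) + q k * cf A L k (oc (w j)))) := by
      intro j
      rw [← Finset.mul_sum, ← Complex.conj_mul']
    simp_rw [this]
    rw [Finset.sum_comm]
    refine Finset.sum_congr rfl fun k _ => ?_
    rw [Finset.mul_sum, Finset.mul_sum, ← Finset.sum_add_distrib, Finset.mul_sum]
    refine Finset.sum_congr rfl fun j _ => ?_
    ring
  have hb : ∀ k ∈ K, ‖(p k * cf A L k U + q k * cf A L k W : ℂ)‖ ^ 2 ≤ ‖cf A L k U‖ ^ 2 + ‖cf A L k W‖ ^ 2 := by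
    intro k hk
    have e : ‖(p k * cf A L k U + q k * cf A L k W : ℂ)‖ ≤ |p k| * ‖cf A L k U‖ + |q k| * ‖cf A L k W‖ := by
      refine (norm_add_le _ _).trans ?_
      simp
    have e2 := pow_le_pow_left₀ (norm_nonneg _) e 2
    have := hpq k hk
    nlinarith [sq_nonneg (|p k| * ‖cf A L k W‖ - |q k| * ‖cf A L k U‖), sq_abs (p k), sq_abs (q k)]
  have hSle : S ≤ ∑ k ∈ K, ‖z k‖ * ‖(p k * cf A L k U + q k * cf A L k W : ℂ)‖ := by
    have : S = ‖(S:ℂ)‖ := by simp [abs_of_nonneg hS0]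
    rw [this, hSe]
    refine (norm_sum_le _ _).trans (le_of_eq ?_)
    simp_rw [norm_mul]
  have hCS := Finset.sum_mul_sq_le_sq_mul_sq K (fun k => ‖z k‖) (fun k => ‖(p k * cf A L k U + q k * cf A L k W : ℂ)‖)
  have hB : ∑ k ∈ K, ‖(p k * cf A L k U + q k * cf A L k W : ℂ)‖ ^ 2 ≤ S := by
    refine (Finset.sum_le_sum hb).trans ?_
    rw [Finset.sum_add_distrib, ← hn]
    exact add_le_add (bessel_fin hA hL K hUc) (bessel_fin hA hL K hWc)
  have h3 : S ^ 2 ≤ (∑ k ∈ K, ‖z k‖ ^ 2) * S := by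
    refine (pow_le_pow_left₀ hS0 hSle 2).trans (hCS.trans ?_)
    gcongr
  rcases hS0.eq_or_lt with h | h
  · rw [← h]; positivity
  · nlinarith

/-- remainder -/
def rem (A L : ℝ) (K : Finset (ℤ × ℤ)) (f : ℝ × ℝ → ℂ) (x : ℝ × ℝ) : ℂ :=
  f x - ∑ k ∈ K, cf A L k f * (starRingEnd ℂ) (Ek A L k x)

lemma rem_cont (A L : ℝ) (K : Finset (ℤ × ℤ)) {f : ℝ × ℝ → ℂ} (hf : Continuous f) : Continuous (rem A L K f) := by
  have := fun k => Ek_cont A L k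
  unfold rem
  refine hf.sub (continuous_finsetSum _ fun k _ => continuous_const.mul (Complex.continuous_conj.comp (this k)))

lemma rem_norm {A L : ℝ} (hA : 0 < A) (hL : 0 < L) (K : Finset (ℤ × ℤ)) {f : ℝ × ℝ → ℂ} (hf : Continuous f) :
    ∫⁻ x in QQ A L, ‖rem A L K f x‖ₑ ^ 2 = ∑' k : ℤ × ℤ, if k ∈ K then 0 else ‖cf A L k f‖ₑ ^ 2 := by
  rw [parseval hA hL _ (rem_cont A L K hf)]
  congr 1; ext k
  have h1 := fun k => Complex.continuous_conj.comp (Ek_cont A L k)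
  have : cf A L k (rem A L K f) = if k ∈ K then 0 else cf A L k f := by
    unfold rem
    have h2 : Continuous fun x => ∑ l ∈ K, cf A L l f * (starRingEnd ℂ) (Ek A L l x) :=
      continuous_finsetSum _ fun k _ => continuous_const.mul (h1 k)
    rw [cf_sub hA hL k hf h2,
      cf_sum hA hL k K _ (fun l x => (starRingEnd ℂ) (Ek A L l x)) h1]
    simp_rw [cf_Ek hA hL]
    by_cases hk : k ∈ K <;> simp [hk]
  rw [this]
  split_ifs <;> simp

lemma tri {ι : Type*} [Fintype ι] (a b : ι → ℂ) :
    √(∑ i, ‖a i + b i‖ ^ 2) ≤ √(∑ i, ‖a i‖ ^ 2) + √(∑ i, ‖b i‖ ^ 2) := by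
  have := norm_add_le (WithLp.toLp 2 a : EuclideanSpace ℂ ι) (WithLp.toLp 2 b)
  simpa [EuclideanSpace.norm_eq] using this

lemma proj_bound {A L α : ℝ} (hA : 0 < A) (hL : 0 < L) {m : ℕ} (u w : Fin m → ℝ × ℝ → ℝ)
    (hu : ∀ j, Continuous (u j)) (hw : ∀ j, Continuous (w j))
    (hort : ∀ i j, ∫ x in QQ A L, (u i x * u j x + w i x * w j x) = if i = j then 1 else 0)
    (hdiv : ∀ j (k : ℤ × ℤ), (α * k.1 : ℂ) * cf A L k (oc (u j)) + k.2 * cf A L k (oc (w j)) = 0)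
    (K : Finset (ℤ × ℤ)) (hK : ∀ k ∈ K, k.2 ≠ 0) (x : ℝ × ℝ) :
    ∑ j, ‖∑ k ∈ K, cf A L k (oc (u j)) * (starRingEnd ℂ) (Ek A L k x)‖ ^ 2 +
      ∑ j, ‖∑ k ∈ K, cf A L k (oc (w j)) * (starRingEnd ℂ) (Ek A L k x)‖ ^ 2 ≤ K.card * (A * L)⁻¹ := by
  set lam : ℤ × ℤ → ℝ := fun k => √(α^2 * (k.1:ℝ)^2 + (k.2:ℝ)^2) with hlam
  set p : ℤ × ℤ → ℝ := fun k => -(k.2:ℝ) / lam k with hp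
  set q : ℤ × ℤ → ℝ := fun k => α * (k.1:ℝ) / lam k with hq
  have hlp : ∀ k ∈ K, 0 < α^2 * (k.1:ℝ)^2 + (k.2:ℝ)^2 := by
    intro k hk
    have : (k.2:ℝ) ≠ 0 := by exact_mod_cast hK k hk
    positivity
  have hl2 : ∀ k ∈ K, lam k ^ 2 = α^2 * (k.1:ℝ)^2 + (k.2:ℝ)^2 := fun k hk => sq_sqrt (hlp k hk).le
  have hl0 : ∀ k ∈ K, lam k ≠ 0 := fun k hk => (sqrt_pos.2 (hlp k hk)).ne'
  have hpq : ∀ k ∈ K, p k ^ 2 + q k ^ 2 = 1 := by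
    intro k hk
    have := hl2 k hk; have h0 := hl0 k hk
    simp only [hp, hq]; field_simp; linarith
  have hcu : ∀ j, ∀ k ∈ K, cf A L k (oc (u j)) = p k * (p k * cf A L k (oc (u j)) + q k * cf A L k (oc (w j))) := by
    intro j k hk
    have h := hdiv j k
    have h2 : ((lam k : ℂ))^2 = α^2 * (k.1:ℂ)^2 + (k.2:ℂ)^2 := by exact_mod_cast hl2 k hk
    have h0 : (lam k : ℂ) ≠ 0 := by exact_mod_cast hl0 k hk
    simp only [hp, hq]; push_cast; field_simp
    rw [h2]; linear_combination (α * k.1 : ℂ) * h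
  have hcw : ∀ j, ∀ k ∈ K, cf A L k (oc (w j)) = q k * (p k * cf A L k (oc (u j)) + q k * cf A L k (oc (w j))) := by
    intro j k hk
    have h := hdiv j k
    have h2 : ((lam k : ℂ))^2 = α^2 * (k.1:ℂ)^2 + (k.2:ℂ)^2 := by exact_mod_cast hl2 k hk
    have h0 : (lam k : ℂ) ≠ 0 := by exact_mod_cast hl0 k hk
    simp only [hp, hq]; push_cast; field_simp
    rw [h2]; linear_combination (k.2 : ℂ) * h
  have b1 := bessel_op hA hL u w hu hw hort K p q hpq (fun k => p k * (starRingEnd ℂ) (Ek A L k x))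
  have b2 := bessel_op hA hL u w hu hw hort K p q hpq (fun k => q k * (starRingEnd ℂ) (Ek A L k x))
  have e1 : ∀ j, ∑ k ∈ K, cf A L k (oc (u j)) * (starRingEnd ℂ) (Ek A L k x) = 
      ∑ k ∈ K, p k * (starRingEnd ℂ) (Ek A L k x) * (p k * cf A L k (oc (u j)) + q k * cf A L k (oc (w j))) := by
    intro j
    refine Finset.sum_congr rfl fun k hk => ?_
    conv_lhs => rw [hcu j k hk]
    ring
  have e2 : ∀ j, ∑ k ∈ K, cf A L k (oc (w j)) * (starRingEnd ℂ) (Ek A L k x) = 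
      ∑ k ∈ K, q k * (starRingEnd ℂ) (Ek A L k x) * (p k * cf A L k (oc (u j)) + q k * cf A L k (oc (w j))) := by
    intro j
    refine Finset.sum_congr rfl fun k hk => ?_
    conv_lhs => rw [hcw j k hk]
    ring
  simp_rw [e1, e2]
  refine (add_le_add b1 b2).trans (le_of_eq ?_)
  rw [← Finset.sum_add_distrib, ← nsmul_eq_mul, ← Finset.sum_const]
  refine Finset.sum_congr rfl fun k hk => ?_
  rw [norm_mul, norm_mul, mul_pow, mul_pow, RCLike.norm_conj, Ek_norm hA hL, Complex.norm_real, Complex.norm_real,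
    norm_eq_abs, norm_eq_abs, sq_abs, sq_abs, ← add_mul, hpq k hk, one_mul]

lemma rumin {L α R : ℝ} (hL : 0 < L) (hα : 0 < α) (hα1 : α ≤ 1) (hR : 0 < R) {m : ℕ} (u w : Fin m → ℝ × ℝ → ℝ)
    (hu : ∀ j, Continuous (u j)) (hw : ∀ j, Continuous (w j))
    (hort : ∀ i j, ∫ x in QQ (L / α) L, (u i x * u j x + w i x * w j x) = if i = j then 1 else 0)
    (hdiv : ∀ j (k : ℤ × ℤ), (α * k.1 : ℂ) * cf (L / α) L k (oc (u j)) + k.2 * cf (L / α) L k (oc (w j)) = 0)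
    (hz : ∀ j (k : ℤ × ℤ), k.2 = 0 → cf (L / α) L k (oc (u j)) = 0 ∧ cf (L / α) L k (oc (w j)) = 0) :
    ∫⁻ x in QQ (L / α) L, ENNReal.ofReal ((max (√(∑ j, (u j x ^ 2 + w j x ^ 2)) - √(π^3/9) / L * R) 0)^2) ≤
     ∑ j, ∑' k : ℤ × ℤ, if α^2 * (k.1:ℝ)^2 + (k.2:ℝ)^2 ≤ R^2 then 0 else
       (‖cf (L / α) L k (oc (u j))‖ₑ ^ 2 + ‖cf (L / α) L k (oc (w j))‖ₑ ^ 2) := by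
  have hA : 0 < L / α := by positivity
  set A := L / α with hAdef
  set K := KK α R with hKdef
  have hrc := fun j => rem_cont A L K (oc_cont (hu j))
  have hsc := fun j => rem_cont A L K (oc_cont (hw j))
  have step1 : ∀ x, ENNReal.ofReal ((max (√(∑ j, (u j x ^ 2 + w j x ^ 2)) - √(π^3/9) / L * R) 0)^2) ≤
      ∑ j, (‖rem A L K (oc (u j)) x‖ₑ ^ 2 + ‖rem A L K (oc (w j)) x‖ₑ ^ 2) := by
    intro x
    simp_rw [← ofReal_sq_enorm]
    simp_rw [← ENNReal.ofReal_add (sq_nonneg _) (sq_nonneg _)]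
    rw [← ENNReal.ofReal_sum_of_nonneg (fun _ _ => by positivity)]
    apply ENNReal.ofReal_le_ofReal
    have hpb := proj_bound hA hL u w hu hw hort hdiv K (fun k hk => ((mem_KK hα hR k).1 hk).1) x
    have hT := tri (ι := Fin m ⊕ Fin m)
      (Sum.elim (fun j => rem A L K (oc (u j)) x) (fun j => rem A L K (oc (w j)) x))
      (Sum.elim (fun j => ∑ k ∈ K, cf A L k (oc (u j)) * (starRingEnd ℂ) (Ek A L k x))
        (fun j => ∑ k ∈ K, cf A L k (oc (w j)) * (starRingEnd ℂ) (Ek A L k x)))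
    simp only [Fintype.sum_sum_type, Sum.elim_inl, Sum.elim_inr] at hT
    have er : ∀ f : ℝ × ℝ → ℂ, rem A L K f x + ∑ k ∈ K, cf A L k f * (starRingEnd ℂ) (Ek A L k x) = f x := by
      intro f; simp [rem]
    have no : ∀ f : ℝ × ℝ → ℝ, ‖oc f x‖ ^ 2 = f x ^ 2 := by
      intro f; simp [oc]
    simp only [er, no] at hT
    rw [← Finset.sum_add_distrib, ← Finset.sum_add_distrib] at hT
    have hcard : √(∑ j, ‖∑ k ∈ K, cf A L k (oc (u j)) * (starRingEnd ℂ) (Ek A L k x)‖ ^ 2 +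
      ∑ j, ‖∑ k ∈ K, cf A L k (oc (w j)) * (starRingEnd ℂ) (Ek A L k x)‖ ^ 2) ≤ √(π^3/9) / L * R := by
      rw [sqrt_le_left (by positivity)]
      refine hpb.trans ?_
      have hc := card_KK hα hα1 hR
      rw [mul_pow, div_pow, sq_sqrt (by positivity)]
      rw [hAdef, show (L / α * L)⁻¹ = α / L^2 by field_simp, ← mul_div_assoc, div_mul_eq_mul_div]
      gcongr
    set X := ∑ j, (‖rem A L K (oc (u j)) x‖ ^ 2 + ‖rem A L K (oc (w j)) x‖ ^ 2) with hX
    have hX0 : 0 ≤ X := by positivity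
    have hm : max (√(∑ j, (u j x ^ 2 + w j x ^ 2)) - √(π^3/9) / L * R) 0 ≤ √X :=
      max_le (by linarith) (sqrt_nonneg _)
    calc _ ≤ √X ^ 2 := pow_le_pow_left₀ (le_max_right _ _) hm 2
      _ = X := sq_sqrt hX0
  calc _ ≤ ∫⁻ x in QQ A L, ∑ j, (‖rem A L K (oc (u j)) x‖ₑ ^ 2 + ‖rem A L K (oc (w j)) x‖ₑ ^ 2) := lintegral_mono step1
    _ = ∑ j, ((∫⁻ x in QQ A L, ‖rem A L K (oc (u j)) x‖ₑ ^ 2) + ∫⁻ x in QQ A L, ‖rem A L K (oc (w j)) x‖ₑ ^ 2) := by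
      rw [lintegral_finsetSum' _ (fun j _ => by have := hrc j; have := hsc j; fun_prop)]
      refine Finset.sum_congr rfl fun j _ => ?_
      rw [lintegral_add_left' (by have := hrc j; fun_prop)]
    _ = _ := by
      refine Finset.sum_congr rfl fun j _ => ?_
      rw [rem_norm hA hL K (oc_cont (hu j)), rem_norm hA hL K (oc_cont (hw j)), ← ENNReal.tsum_add]
      congr 1; ext k
      by_cases h0 : k.2 = 0
      · simp [hz j k h0]
      · by_cases hk : α^2 * (k.1:ℝ)^2 + (k.2:ℝ)^2 ≤ R^2
        · have : k ∈ K := (mem_KK hα hR k).2 ⟨h0, hk⟩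
          simp [this, hk]
        · have : k ∉ K := fun h => hk ((mem_KK hα hR k).1 h).2
          simp [this, hk]

lemma layer_low {r b : ℝ} (hr : 0 ≤ r) (hb : 0 < b) :
    ENNReal.ofReal (r^4 / (6 * b^2)) ≤
      ∫⁻ R in Set.Ioi (0:ℝ), ENNReal.ofReal (2 * R) * ENNReal.ofReal ((max (r - b * R) 0)^2) := by
  have hT : 0 ≤ r / b := by positivity
  have h1 : ∫ R in (0:ℝ)..(r/b), 2 * R * (r - b * R)^2 = r^4 / (6 * b^2) := by
    have hd : ∀ R ∈ Set.uIcc 0 (r/b), HasDerivAt (fun R : ℝ => r^2 * R^2 - 4/3 * r * b * R^3 + b^2 * R^4 / 2) (2 * R * (r - b * R)^2) R := by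
      intro R _
      have := (((hasDerivAt_pow 2 R).const_mul (r^2)).sub ((hasDerivAt_pow 3 R).const_mul (4/3 * r * b))).add
        (((hasDerivAt_pow 4 R).const_mul (b^2)).div_const 2)
      refine this.congr_deriv ?_
      push_cast; ring
    rw [intervalIntegral.integral_eq_sub_of_hasDerivAt hd (by apply Continuous.intervalIntegrable; fun_prop)]
    field_simp
    ring
  rw [← h1, intervalIntegral.integral_of_le hT, ofReal_integral_eq_lintegral_ofReal]
  · refine le_trans ?_ (lintegral_mono_set (fun x (hx : x ∈ Set.Ioc 0 (r/b)) => (hx.1 : x ∈ Set.Ioi 0)))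
    refine setLIntegral_mono' measurableSet_Ioc fun R hR => ?_
    rw [← ENNReal.ofReal_mul (by linarith [hR.1])]
    apply ENNReal.ofReal_le_ofReal
    have h2 : 0 ≤ r - b * R := by
      have := hR.2; rw [le_div_iff₀ hb] at this; linarith
    rw [max_eq_left h2]
  · exact (Continuous.integrableOn_Icc (by fun_prop)).mono_set Set.Ioc_subset_Icc_self
  · refine (ae_restrict_iff' measurableSet_Ioc).2 (Filter.Eventually.of_forall fun R hR => ?_)
    have := hR.1
    simp only [Pi.zero_apply]
    positivity

lemma layer_up {l : ℝ} (hl : 0 ≤ l) (C : ENNReal) :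
    ∫⁻ R in Set.Ioi (0:ℝ), ENNReal.ofReal (2 * R) * (if l ≤ R^2 then 0 else C) ≤ ENNReal.ofReal l * C := by
  have hs : 0 ≤ √l := sqrt_nonneg l
  have h1 : ∫ R in (0:ℝ)..√l, 2 * R = l := by
    rw [intervalIntegral.integral_const_mul, integral_id, sq_sqrt hl]; ring
  have h2 : ENNReal.ofReal l = ∫⁻ R in Set.Ioc 0 (√l), ENNReal.ofReal (2 * R) := by
    conv_lhs => rw [← h1, intervalIntegral.integral_of_le hs]
    rw [ofReal_integral_eq_lintegral_ofReal]
    · exact (Continuous.integrableOn_Icc (by fun_prop)).mono_set Set.Ioc_subset_Icc_self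
    · refine (ae_restrict_iff' measurableSet_Ioc).2 (Filter.Eventually.of_forall fun R hR => ?_)
      have := hR.1
      simp only [Pi.zero_apply]
      positivity
  rw [h2, ← lintegral_mul_const _ (by fun_prop), ← lintegral_indicator measurableSet_Ioc, ← lintegral_indicator measurableSet_Ioi]
  apply lintegral_mono
  intro R
  by_cases hR : R ∈ Set.Ioi (0:ℝ)
  · rw [Set.indicator_of_mem hR]
    by_cases h : l ≤ R^2
    · simp [h]
    · have : R ∈ Set.Ioc 0 (√l) := ⟨hR, le_sqrt_of_sq_le (not_le.1 h).le⟩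
      rw [Set.indicator_of_mem this]
      simp [h]
  · rw [Set.indicator_of_notMem hR]; exact bot_le

lemma main_ineq {L α : ℝ} (hL : 0 < L) (hα : 0 < α) (hα1 : α ≤ 1) {m : ℕ} (u w : Fin m → ℝ × ℝ → ℝ)
    (hu : ∀ j, Continuous (u j)) (hw : ∀ j, Continuous (w j))
    (hort : ∀ i j, ∫ x in QQ (L / α) L, (u i x * u j x + w i x * w j x) = if i = j then 1 else 0)
    (hdiv : ∀ j (k : ℤ × ℤ), (α * k.1 : ℂ) * cf (L / α) L k (oc (u j)) + k.2 * cf (L / α) L k (oc (w j)) = 0)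
    (hz : ∀ j (k : ℤ × ℤ), k.2 = 0 → cf (L / α) L k (oc (u j)) = 0 ∧ cf (L / α) L k (oc (w j)) = 0) :
    ∫⁻ x in QQ (L / α) L, ENNReal.ofReal ((∑ j, (u j x ^ 2 + w j x ^ 2))^2 / (6 * (√(π^3/9) / L)^2)) ≤
     ∑ j, ∑' k : ℤ × ℤ, ENNReal.ofReal (α^2 * (k.1:ℝ)^2 + (k.2:ℝ)^2) *
       (‖cf (L / α) L k (oc (u j))‖ₑ ^ 2 + ‖cf (L / α) L k (oc (w j))‖ₑ ^ 2) := by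
  set b := √(π^3/9) / L with hb
  have hb0 : 0 < b := by positivity
  set ρ : ℝ × ℝ → ℝ := fun x => ∑ j, (u j x ^ 2 + w j x ^ 2) with hρ
  have hρc : Continuous ρ := by fun_prop
  have hρ0 : ∀ x, 0 ≤ ρ x := fun x => by positivity
  calc ∫⁻ x in QQ (L / α) L, ENNReal.ofReal ((ρ x)^2 / (6 * b^2))
      ≤ ∫⁻ x in QQ (L / α) L, ∫⁻ R in Set.Ioi (0:ℝ), ENNReal.ofReal (2 * R) * ENNReal.ofReal ((max (√(ρ x) - b * R) 0)^2) := by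
        apply lintegral_mono
        intro x
        refine le_trans (le_of_eq ?_) (layer_low (sqrt_nonneg (ρ x)) hb0)
        congr 2
        rw [show √(ρ x)^4 = (√(ρ x)^2)^2 by ring, sq_sqrt (hρ0 x)]
    _ = ∫⁻ R in Set.Ioi (0:ℝ), ∫⁻ x in QQ (L / α) L, ENNReal.ofReal (2 * R) * ENNReal.ofReal ((max (√(ρ x) - b * R) 0)^2) := by
        apply lintegral_lintegral_swap
        apply Measurable.aemeasurable
        change Measurable fun p : (ℝ × ℝ) × ℝ => ENNReal.ofReal (2 * p.2) * ENNReal.ofReal ((max (√(ρ p.1) - b * p.2) 0)^2)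
        have m1 : Measurable fun p : (ℝ × ℝ) × ℝ => ENNReal.ofReal (2 * p.2) :=
          (by fun_prop : Continuous fun p : (ℝ × ℝ) × ℝ => 2 * p.2).measurable.ennreal_ofReal
        have m2 : Measurable fun p : (ℝ × ℝ) × ℝ => ENNReal.ofReal ((max (√(ρ p.1) - b * p.2) 0)^2) :=
          (by fun_prop : Continuous fun p : (ℝ × ℝ) × ℝ => (max (√(ρ p.1) - b * p.2) 0)^2).measurable.ennreal_ofReal
        exact m1.mul m2
    _ ≤ ∫⁻ R in Set.Ioi (0:ℝ), ∑ j, ∑' k : ℤ × ℤ, ENNReal.ofReal (2 * R) * (if α^2 * (k.1:ℝ)^2 + (k.2:ℝ)^2 ≤ R^2 then 0 else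
       (‖cf (L / α) L k (oc (u j))‖ₑ ^ 2 + ‖cf (L / α) L k (oc (w j))‖ₑ ^ 2)) := by
        refine setLIntegral_mono' measurableSet_Ioi fun R hR => ?_
        rw [lintegral_const_mul' _ _ ENNReal.ofReal_ne_top]
        simp_rw [ENNReal.tsum_mul_left]
        rw [← Finset.mul_sum]
        gcongr
        exact rumin hL hα hα1 hR u w hu hw hort hdiv hz
    _ = ∑ j, ∑' k : ℤ × ℤ, ∫⁻ R in Set.Ioi (0:ℝ), ENNReal.ofReal (2 * R) * (if α^2 * (k.1:ℝ)^2 + (k.2:ℝ)^2 ≤ R^2 then 0 else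
       (‖cf (L / α) L k (oc (u j))‖ₑ ^ 2 + ‖cf (L / α) L k (oc (w j))‖ₑ ^ 2)) := by
        have hm : ∀ (j : Fin m) (k : ℤ × ℤ), Measurable fun R : ℝ => ENNReal.ofReal (2 * R) * (if α^2 * (k.1:ℝ)^2 + (k.2:ℝ)^2 ≤ R^2 then 0 else
       (‖cf (L / α) L k (oc (u j))‖ₑ ^ 2 + ‖cf (L / α) L k (oc (w j))‖ₑ ^ 2)) := by
          intro j k
          apply Measurable.mul (by fun_prop)
          exact Measurable.ite (measurableSet_le (by fun_prop) (by fun_prop)) measurable_const measurable_const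
        rw [lintegral_finsetSum' _ (fun j _ => (Measurable.tsum (hm j)).aemeasurable)]
        refine Finset.sum_congr rfl fun j _ => ?_
        rw [lintegral_tsum fun k => (hm j k).aemeasurable]
    _ ≤ _ := by
        gcongr with j _ k
        exact layer_up (by positivity) _

lemma pd1_has {f : ℝ × ℝ → ℝ} (hf : ContDiff ℝ 1 f) (s t : ℝ) :
    HasDerivAt (fun s => f (s, t)) (fderiv ℝ f (s, t) (1, 0)) s := by
  have h1 : HasFDerivAt f (fderiv ℝ f (s, t)) (s, t) := (hf.differentiable one_ne_zero).differentiableAt.hasFDerivAt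
  exact h1.comp_hasDerivAt s ((hasDerivAt_id s).prodMk (hasDerivAt_const s t))

lemma pd2_has {f : ℝ × ℝ → ℝ} (hf : ContDiff ℝ 1 f) (s t : ℝ) :
    HasDerivAt (fun t => f (s, t)) (fderiv ℝ f (s, t) (0, 1)) t := by
  have h1 : HasFDerivAt f (fderiv ℝ f (s, t)) (s, t) := (hf.differentiable one_ne_zero).differentiableAt.hasFDerivAt
  exact h1.comp_hasDerivAt t ((hasDerivAt_const t s).prodMk (hasDerivAt_id t))

lemma pd1_eq {f : ℝ × ℝ → ℝ} (hf : ContDiff ℝ 1 f) : pd1 f = fun x => fderiv ℝ f x (1, 0) := by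
  ext x; exact (pd1_has hf x.1 x.2).deriv

lemma pd2_eq {f : ℝ × ℝ → ℝ} (hf : ContDiff ℝ 1 f) : pd2 f = fun x => fderiv ℝ f x (0, 1) := by
  ext x; exact (pd2_has hf x.1 x.2).deriv

lemma pd1_cont {f : ℝ × ℝ → ℝ} (hf : ContDiff ℝ 1 f) : Continuous (pd1 f) := by
  rw [pd1_eq hf]
  exact (hf.continuous_fderiv one_ne_zero).clm_apply continuous_const

lemma pd2_cont {f : ℝ × ℝ → ℝ} (hf : ContDiff ℝ 1 f) : Continuous (pd2 f) := by
  rw [pd2_eq hf]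
  exact (hf.continuous_fderiv one_ne_zero).clm_apply continuous_const

lemma cf_pd1 {A L : ℝ} (hA : 0 < A) (hL : 0 < L) (k : ℤ × ℤ) {f : ℝ × ℝ → ℝ} (hf : ContDiff ℝ 1 f)
    (hp : ∀ x : ℝ × ℝ, f (x.1 + A, x.2) = f x) :
    cf A L k (oc (pd1 f)) = (2 * π * I * k.1 / A) * cf A L k (oc f) := by
  apply cf_d1 hA hL k _ _ (oc_cont hf.continuous) (oc_cont (pd1_cont hf))
  · intro s t
    have := pd1_has hf s t
    rw [show oc (pd1 f) (s, t) = ((fderiv ℝ f (s, t) (1, 0) : ℝ) : ℂ) by rw [oc, pd1_eq hf]]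
    exact this.ofReal_comp
  · intro t
    have := hp (0, t)
    simp only [zero_add] at this
    simp [oc, this]

lemma cf_pd2 {A L : ℝ} (hL : 0 < L) (k : ℤ × ℤ) {f : ℝ × ℝ → ℝ} (hf : ContDiff ℝ 1 f)
    (hp : ∀ x : ℝ × ℝ, f (x.1, x.2 + L) = f x) :
    cf A L k (oc (pd2 f)) = (2 * π * I * k.2 / L) * cf A L k (oc f) := by
  apply cf_d2 hL k _ _ (oc_cont (pd2_cont hf))
  · intro s t
    have := pd2_has hf s t
    rw [show oc (pd2 f) (s, t) = ((fderiv ℝ f (s, t) (0, 1) : ℝ) : ℂ) by rw [oc, pd2_eq hf]]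
    exact this.ofReal_comp
  · intro s
    have := hp (s, 0)
    simp only [zero_add] at this
    simp [oc, this]

lemma grad_sum {L α : ℝ} (hL : 0 < L) (hα : 0 < α) {f : ℝ × ℝ → ℝ} (hf : ContDiff ℝ 1 f)
    (hp1 : ∀ x : ℝ × ℝ, f (x.1 + L / α, x.2) = f x) (hp2 : ∀ x : ℝ × ℝ, f (x.1, x.2 + L) = f x) :
    ENNReal.ofReal (∫ x in QQ (L / α) L, (pd1 f x ^ 2 + pd2 f x ^ 2)) =
      ENNReal.ofReal ((2 * π / L)^2) * ∑' k : ℤ × ℤ, ENNReal.ofReal (α^2 * (k.1:ℝ)^2 + (k.2:ℝ)^2) *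
       ‖cf (L / α) L k (oc f)‖ₑ ^ 2 := by
  have hA : 0 < L / α := by positivity
  have c1' := pd1_cont hf
  have c2' := pd2_cont hf
  rw [ofReal_integral_eq_lintegral_ofReal (int_QR _ _ (by fun_prop)) (Filter.Eventually.of_forall fun _ => by positivity)]
  have e : ∀ (g : ℝ × ℝ → ℝ) (x : ℝ × ℝ), ENNReal.ofReal (g x ^ 2) = ‖oc g x‖ₑ ^ 2 := by
    intro g x; rw [← ofReal_sq_enorm]; simp [oc]
  simp_rw [ENNReal.ofReal_add (sq_nonneg _) (sq_nonneg _), e]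
  have o1 := oc_cont c1'
  have o2 := oc_cont c2'
  rw [lintegral_add_left' (by fun_prop), parseval hA hL _ o1, parseval hA hL _ o2, ← ENNReal.tsum_add, ← ENNReal.tsum_mul_left]
  congr 1; ext k
  rw [cf_pd1 hA hL k hf hp1, cf_pd2 hL k hf hp2, enorm_mul, enorm_mul, mul_pow, mul_pow, ← add_mul, ← mul_assoc,
    ← ofReal_sq_enorm, ← ofReal_sq_enorm, ← ENNReal.ofReal_add (by positivity) (by positivity),
    ← ENNReal.ofReal_mul (by positivity)]
  congr 2
  simp [abs_of_pos hL, abs_of_pos hα, abs_of_pos pi_pos]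
  simp only [div_pow, mul_pow, sq_abs]
  field_simp

lemma cf_mean {A L : ℝ} (hL : 0 < L) (k : ℤ × ℤ) (hk : k.2 = 0) {f : ℝ × ℝ → ℝ} 
    (h : ∀ s, ∫ t in (0:ℝ)..L, f (s, t) = 0) : cf A L k (oc f) = 0 := by
  have : ∀ s, (c1 L k.2 fun t => oc f (s, t)) = 0 := by
    intro s
    unfold c1 en oc
    simp only [hk, Int.cast_zero, mul_zero, zero_mul, zero_div, neg_zero, Complex.exp_zero, mul_one]
    rw [intervalIntegral.integral_const_mul, intervalIntegral.integral_ofReal, h]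
    simp
  unfold cf
  simp_rw [this]
  simp [c1]

end RuminAux

theorem stmt_18 (L α : ℝ) (hL : 0 < L) (hα0 : 0 < α) (hα1 : α ≤ 1)
    (m : ℕ) (v : Fin m → ℝ × ℝ → ℝ × ℝ)
    (hC1 : ∀ j, ContDiff ℝ 1 (v j))
    (hper1 : ∀ j (x : ℝ × ℝ), v j (x.1 + L / α, x.2) = v j x)
    (hper2 : ∀ j (x : ℝ × ℝ), v j (x.1, x.2 + L) = v j x)
    (hdiv : ∀ j x, pd1 (fun y => (v j y).1) x + pd2 (fun y => (v j y).2) x = 0)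
    (hmean : ∀ j (x₁ : ℝ), (∫ t in (0:ℝ)..L, v j (x₁, t)) = 0)
    (hortho : ∀ i j, (∫ x in Set.Ioc (0:ℝ) (L / α) ×ˢ Set.Ioc (0:ℝ) L,
        ((v i x).1 * (v j x).1 + (v i x).2 * (v j x).2)) = if i = j then 1 else 0) :
    (∫ x in Set.Ioc (0:ℝ) (L / α) ×ˢ Set.Ioc (0:ℝ) L,
        (∑ j, ((v j x).1 ^ 2 + (v j x).2 ^ 2)) ^ 2) ≤
      (π / 6) * ∑ j, ∫ x in Set.Ioc (0:ℝ) (L / α) ×ˢ Set.Ioc (0:ℝ) L, gradSq (v j) x := by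
  have hA : 0 < L / α := by positivity
  have hQ : Set.Ioc (0:ℝ) (L / α) ×ˢ Set.Ioc (0:ℝ) L = QQ (L / α) L := rfl
  rw [hQ] at *
  set u : Fin m → ℝ × ℝ → ℝ := fun j y => (v j y).1 with hu
  set w : Fin m → ℝ × ℝ → ℝ := fun j y => (v j y).2 with hw
  have u1 : ∀ j, ContDiff ℝ 1 (u j) := fun j => (hC1 j).fst
  have w1 : ∀ j, ContDiff ℝ 1 (w j) := fun j => (hC1 j).snd
  have up1 : ∀ j (x : ℝ × ℝ), u j (x.1 + L / α, x.2) = u j x := fun j x => congrArg Prod.fst (hper1 j x)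
  have up2 : ∀ j (x : ℝ × ℝ), u j (x.1, x.2 + L) = u j x := fun j x => congrArg Prod.fst (hper2 j x)
  have wp1 : ∀ j (x : ℝ × ℝ), w j (x.1 + L / α, x.2) = w j x := fun j x => congrArg Prod.snd (hper1 j x)
  have wp2 : ∀ j (x : ℝ × ℝ), w j (x.1, x.2 + L) = w j x := fun j x => congrArg Prod.snd (hper2 j x)
  have hvi : ∀ j s, IntervalIntegrable (fun t => v j (s, t)) volume 0 L := by
    intro j s
    have := (hC1 j).continuous
    apply Continuous.intervalIntegrable; fun_prop
  have um : ∀ j s, ∫ t in (0:ℝ)..L, u j (s, t) = 0 := by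
    intro j s
    have := (ContinuousLinearMap.fst ℝ ℝ ℝ).intervalIntegral_comp_comm (hvi j s)
    rw [hmean] at this
    simpa using this
  have wm : ∀ j s, ∫ t in (0:ℝ)..L, w j (s, t) = 0 := by
    intro j s
    have := (ContinuousLinearMap.snd ℝ ℝ ℝ).intervalIntegral_comp_comm (hvi j s)
    rw [hmean] at this
    simpa using this
  have hdv : ∀ j (k : ℤ × ℤ), (α * k.1 : ℂ) * cf (L / α) L k (oc (u j)) + k.2 * cf (L / α) L k (oc (w j)) = 0 := by
    intro j k
    have e1 := cf_pd1 hA hL k (u1 j) (up1 j)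
    have e2 := cf_pd2 (A := L / α) hL k (w1 j) (wp2 j)
    have e3 : (oc (pd1 (u j))) = fun x => ∑ i ∈ ({0} : Finset ℕ), (-1 : ℂ) * oc (pd2 (w j)) x := by
      ext x
      have := hdiv j x
      have h' : pd1 (u j) x = - pd2 (w j) x := by linarith
      simp [oc, h']
    rw [e3, cf_sum hA hL k _ (fun _ => (-1:ℂ)) (fun _ => oc (pd2 (w j))) (fun _ => oc_cont (pd2_cont (w1 j)))] at e1
    simp only [Finset.sum_singleton, e2] at e1
    have hL' : (L:ℂ) ≠ 0 := by exact_mod_cast hL.ne'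
    have hα' : (α:ℂ) ≠ 0 := by exact_mod_cast hα0.ne'
    have hpi : (π:ℂ) ≠ 0 := by exact_mod_cast pi_ne_zero
    push_cast at e1
    field_simp at e1
    linear_combination -e1
  have hz : ∀ j (k : ℤ × ℤ), k.2 = 0 → cf (L / α) L k (oc (u j)) = 0 ∧ cf (L / α) L k (oc (w j)) = 0 :=
    fun j k hk => ⟨cf_mean hL k hk (um j), cf_mean hL k hk (wm j)⟩
  have main := main_ineq hL hα0 hα1 u w (fun j => (u1 j).continuous) (fun j => (w1 j).continuous) hortho hdv hz
  have hcu := fun j => (u1 j).continuous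
  have hcw := fun j => (w1 j).continuous
  have hgc : ∀ j, Continuous (gradSq (v j)) := by
    intro j
    have := pd1_cont (u1 j); have := pd2_cont (u1 j); have := pd1_cont (w1 j); have := pd2_cont (w1 j)
    change Continuous fun x => pd1 (u j) x ^ 2 + pd2 (u j) x ^ 2 + pd1 (w j) x ^ 2 + pd2 (w j) x ^ 2
    fun_prop
  have hg0 : ∀ j x, 0 ≤ gradSq (v j) x := fun j x => by unfold gradSq; positivity
  have hG : ∀ j, ENNReal.ofReal (∫ x in QQ (L / α) L, gradSq (v j) x) = ENNReal.ofReal ((2 * π / L)^2) *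
      ∑' k : ℤ × ℤ, ENNReal.ofReal (α^2 * (k.1:ℝ)^2 + (k.2:ℝ)^2) *
       (‖cf (L / α) L k (oc (u j))‖ₑ ^ 2 + ‖cf (L / α) L k (oc (w j))‖ₑ ^ 2) := by
    intro j
    have := pd1_cont (u1 j); have := pd2_cont (u1 j); have := pd1_cont (w1 j); have := pd2_cont (w1 j)
    simp_rw [mul_add]
    rw [ENNReal.tsum_add, mul_add, ← grad_sum hL hα0 (u1 j) (up1 j) (up2 j), ← grad_sum hL hα0 (w1 j) (wp1 j) (wp2 j),
      ← ENNReal.ofReal_add (integral_nonneg fun _ => by positivity) (integral_nonneg fun _ => by positivity),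
      ← integral_add (int_QR _ _ (by fun_prop)) (int_QR _ _ (by fun_prop))]
    congr 2; ext x
    simp only [gradSq, hu, hw]; ring
  have m2 := mul_le_mul_right main (ENNReal.ofReal ((2 * π / L)^2))
  rw [Finset.mul_sum] at m2
  simp_rw [← hG] at m2
  rw [← ENNReal.ofReal_sum_of_nonneg (fun j _ => integral_nonneg (hg0 j)),
    ← ofReal_integral_eq_lintegral_ofReal (int_QR _ _ (by fun_prop)) (Filter.Eventually.of_forall fun _ => by positivity),
    ← ENNReal.ofReal_mul (by positivity), ENNReal.ofReal_le_ofReal_iff (Finset.sum_nonneg fun j _ => integral_nonneg (hg0 j)),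
    integral_div, div_pow (√_), sq_sqrt (by positivity)] at m2
  change (∫ x in QQ (L / α) L, (∑ j, (u j x ^ 2 + w j x ^ 2)) ^ 2) ≤ _
  set X := ∫ x in QQ (L / α) L, (∑ j, (u j x ^ 2 + w j x ^ 2)) ^ 2
  have e : (2 * π / L)^2 * (X / (6 * (π^3/9 / L^2))) = 6 / π * X := by
    field_simp
    ring
  rw [e] at m2
  calc X = π / 6 * (6 / π * X) := by field_simp
    _ ≤ _ := by gcongr
end

section
/- Let L > 0, 0 < α ≤ 1, and consider the elongated torus T²_α = (0, L/α) × (0, L). Let w_1, …, w_m : ℝ² → ℝ² be C¹ vector fields, periodic with period L/α in x_1 and period L in x_2, each depending only on the variable x_1, with div w_j = 0 on ℝ², with ∫_{T²_α} w_j(x) dx = 0, and orthonormal in L²(T²_α; ℝ²), i.e. ∫_{T²_α} ⟨w_i(x), w_j(x)⟩ dx = δ_{ij}. Then ρ(x) := ∑_{j=1}^m |w_j(x)|² satisfies ∫_{T²_α} ρ(x)² dx ≤ (6/L) ∑_{j=1}^m ( ∫_{T²_α} |∇w_j(x)|² dx )^{1/2}. -/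
open Real MeasureTheory

theorem wcs (a b : ℝ) (hab : a ≤ b) (k φ : ℝ → ℝ) (hk : Continuous k) (hφ : Continuous φ)
    (hk0 : ∀ u ∈ Set.Icc a b, 0 ≤ k u) (K : ℝ) (hK : ∫ u in a..b, k u = K) (hKpos : 0 < K) :
    (∫ u in a..b, k u * φ u) ^ 2 ≤ K * ∫ u in a..b, k u * φ u ^ 2 := by
  set I := ∫ u in a..b, k u * φ u with hI
  set J := ∫ u in a..b, k u * φ u ^ 2 with hJ
  have h0 : 0 ≤ ∫ u in a..b, k u * (K * φ u - I) ^ 2 :=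
    intervalIntegral.integral_nonneg hab fun u hu => mul_nonneg (hk0 u hu) (sq_nonneg _)
  have h1 : ∫ u in a..b, k u * (K * φ u - I) ^ 2 = K ^ 2 * J - 2 * K * I * I + I ^ 2 * K := by
    have : ∀ u, k u * (K * φ u - I) ^ 2
        = K ^ 2 * (k u * φ u ^ 2) - 2 * K * I * (k u * φ u) + I ^ 2 * k u := fun u => by ring
    simp_rw [this]
    rw [intervalIntegral.integral_add, intervalIntegral.integral_sub,
      intervalIntegral.integral_const_mul, intervalIntegral.integral_const_mul,
      intervalIntegral.integral_const_mul, hK]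
    all_goals exact Continuous.intervalIntegrable (by fun_prop) _ _
  rw [h1] at h0
  have : 0 ≤ K * (K * J - I ^ 2) := by nlinarith
  have := nonneg_of_mul_nonneg_right this hKpos
  linarith

theorem swapc (a b c d : ℝ) (hab : a ≤ b) (hcd : c ≤ d) (f : ℝ → ℝ → ℝ)
    (hf : Continuous (Function.uncurry f)) :
    ∫ x in a..b, ∫ y in c..d, f x y = ∫ y in c..d, ∫ x in a..b, f x y := by
  simp only [intervalIntegral.integral_of_le hab, intervalIntegral.integral_of_le hcd]
  apply MeasureTheory.integral_integral_swap
  rw [Measure.prod_restrict]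
  have h1 : IntegrableOn (Function.uncurry f) (Set.Icc a b ×ˢ Set.Icc c d) (volume.prod volume) :=
    hf.continuousOn.integrableOn_compact (isCompact_Icc.prod isCompact_Icc)
  exact h1.mono_set (Set.prod_mono Set.Ioc_subset_Icc_self Set.Ioc_subset_Icc_self)

theorem conv_int (ℓ : ℝ) (hℓ : 0 < ℓ) (a b : ℝ) (hab : a ≤ b) (k φ : ℝ → ℝ) (c : ℝ) (hk : Continuous k)
    (hφ : Continuous φ) (hp : Function.Periodic φ ℓ) :
    ∫ x in (0:ℝ)..ℓ, ∫ u in a..b, k u * φ (x + c * u)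
      = (∫ u in a..b, k u) * ∫ x in (0:ℝ)..ℓ, φ x := by
  rw [swapc 0 ℓ a b hℓ.le hab]
  · rw [← intervalIntegral.integral_mul_const]
    congr 1; ext u
    rw [intervalIntegral.integral_const_mul]
    congr 1
    rw [intervalIntegral.integral_comp_add_right (fun x => φ x) (c * u)]
    have := hp.intervalIntegral_add_eq (0 + c * u) 0
    rw [zero_add ℓ] at this
    rw [← this]; congr 1; ring
  · simp only [Function.uncurry_def]; fun_prop

noncomputable def av (g : ℝ → ℝ) (h x : ℝ) : ℝ := ∫ u in (-(1/2):ℝ)..(1/2), g (x + h * u)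

theorem av_cont (g : ℝ → ℝ) (hg : Continuous g) : Continuous fun p : ℝ × ℝ => av g p.1 p.2 := by
  unfold av
  apply intervalIntegral.continuous_parametric_intervalIntegral_of_continuous'
  fun_prop

theorem av_sq (ℓ : ℝ) (hℓ : 0 < ℓ) (g : ℝ → ℝ) (hg : Continuous g) (hp : Function.Periodic g ℓ)
    (h : ℝ) : ∫ x in (0:ℝ)..ℓ, (av g h x) ^ 2 ≤ ∫ x in (0:ℝ)..ℓ, g x ^ 2 := by
  have := conv_int ℓ hℓ (-(1/2)) (1/2) (by norm_num) (fun _ => 1) (fun x => g x ^ 2) h (by fun_prop) (by fun_prop)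
    (fun x => by simp [hp x])
  have e : (∫ u in (-(1/2):ℝ)..(1/2), (1:ℝ)) = 1 := by norm_num
  rw [e, one_mul] at this
  rw [← this]
  have hc := av_cont g hg
  apply intervalIntegral.integral_mono_on hℓ.le
  · exact Continuous.intervalIntegrable (by fun_prop) _ _
  · apply Continuous.intervalIntegrable
    apply intervalIntegral.continuous_parametric_intervalIntegral_of_continuous'
    fun_prop
  · intro x _
    have := wcs (-(1/2)) (1/2) (by norm_num) (fun _ => 1) (fun u => g (x + h * u)) (by fun_prop)
      (by fun_prop) (by simp) 1 e one_pos
    simpa [av] using this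

theorem bd4 (ℓ : ℝ) (hℓ : 0 < ℓ) (g : ℝ → ℝ) (hg : Continuous g) (hp : Function.Periodic g ℓ)
    (h : ℝ) (h1 : ∫ x in (0:ℝ)..ℓ, g x ^ 2 = 1) :
    ∫ x in (0:ℝ)..ℓ, (g x - av g h x) ^ 2 ≤ 4 := by
  have h2 := av_sq ℓ hℓ g hg hp h
  have hc := av_cont g hg
  have : ∫ x in (0:ℝ)..ℓ, (g x - av g h x) ^ 2
      ≤ ∫ x in (0:ℝ)..ℓ, (2 * g x ^ 2 + 2 * av g h x ^ 2) := by
    apply intervalIntegral.integral_mono_on hℓ.le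
    · exact Continuous.intervalIntegrable (by fun_prop) _ _
    · exact Continuous.intervalIntegrable (by fun_prop) _ _
    · intro x _
      nlinarith [sq_nonneg (g x + av g h x)]
  rw [intervalIntegral.integral_add, intervalIntegral.integral_const_mul,
    intervalIntegral.integral_const_mul] at this
  · linarith
  all_goals exact Continuous.intervalIntegrable (by fun_prop) _ _

theorem R_eq (g : ℝ → ℝ) (hg : ContDiff ℝ 1 g) (h x : ℝ) :
    g x - av g h x = ∫ u in (0:ℝ)..(1/2),
      (1/2 - u) * (h * (deriv g (x + (-h) * u) - deriv g (x + h * u))) := by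
  have hgc := hg.continuous
  have hd : Continuous (deriv g) := hg.continuous_deriv le_rfl
  have hder : ∀ y, HasDerivAt g (deriv g y) y := fun y =>
    (hg.differentiable one_ne_zero y).hasDerivAt
  have hav : av g h x = (∫ u in (0:ℝ)..(1/2), g (x + (-h) * u)) + ∫ u in (0:ℝ)..(1/2), g (x + h * u) := by
    unfold av
    rw [← intervalIntegral.integral_add_adjacent_intervals (b := 0)]
    · congr 1
      have := intervalIntegral.integral_comp_neg (a := 0) (b := 1/2) (fun u => g (x + h * u))
      rw [neg_zero] at this
      rw [← this]
      congr 1; ext u; congr 1; ring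
    all_goals exact Continuous.intervalIntegrable (by fun_prop) _ _
  have ftc : ∫ u in (0:ℝ)..(1/2), (-(2 * g x - g (x + (-h) * u) - g (x + h * u)) +
      (1/2 - u) * (h * (deriv g (x + (-h) * u) - deriv g (x + h * u)))) =
      (fun u => (1/2 - u) * (2 * g x - g (x + (-h) * u) - g (x + h * u))) (1/2)
      - (fun u => (1/2 - u) * (2 * g x - g (x + (-h) * u) - g (x + h * u))) 0 := by
    refine intervalIntegral.integral_eq_sub_of_hasDerivAt
      (f := fun u => (1/2 - u) * (2 * g x - g (x + (-h) * u) - g (x + h * u))) ?_ ?_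
    · intro u _
      have l1 : ∀ c : ℝ, HasDerivAt (fun u => g (x + c * u)) (deriv g (x + c * u) * (c * 1)) u :=
        fun c => (hder (x + c * u)).comp u (((hasDerivAt_id u).const_mul c).const_add x)
      have := (((hasDerivAt_id u).const_sub (1/2))).mul
        (((l1 (-h)).const_sub (2 * g x)).sub (l1 h))
      refine this.congr_deriv ?_
      simp only [Pi.sub_apply, id]
      ring
    · exact Continuous.intervalIntegrable (by fun_prop) _ _
  rw [intervalIntegral.integral_add, intervalIntegral.integral_neg, intervalIntegral.integral_sub,
    intervalIntegral.integral_sub] at ftc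
  · simp only [intervalIntegral.integral_const] at ftc
    rw [hav]
    norm_num at ftc ⊢
    linarith
  all_goals exact Continuous.intervalIntegrable (by fun_prop) _ _

theorem int8 : ∫ u in (0:ℝ)..(1/2), (1/2 - u) = 1/8 := by
  rw [intervalIntegral.integral_sub] <;> simp
  norm_num

theorem bdG (ℓ : ℝ) (hℓ : 0 < ℓ) (g : ℝ → ℝ) (hg : ContDiff ℝ 1 g) (hp : Function.Periodic g ℓ)
    (h : ℝ) :
    ∫ x in (0:ℝ)..ℓ, (g x - av g h x) ^ 2 ≤ h ^ 2 / 16 * ∫ x in (0:ℝ)..ℓ, deriv g x ^ 2 := by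
  have hgc := hg.continuous
  have hd : Continuous (deriv g) := hg.continuous_deriv le_rfl
  have hc := av_cont g hgc
  have hdp : Function.Periodic (fun x => deriv g x ^ 2) ℓ := fun x => by
    have : (fun y => g (y + ℓ)) = g := funext hp
    have h2 := deriv_comp_add_const g ℓ x
    rw [this] at h2
    simp [h2]
  have key : ∀ c, ∫ x in (0:ℝ)..ℓ, ∫ u in (0:ℝ)..(1/2), (1/2 - u) * (deriv g (x + c * u)) ^ 2
      = 1 / 8 * ∫ x in (0:ℝ)..ℓ, deriv g x ^ 2 := fun c => by
    have := conv_int ℓ hℓ 0 (1/2) (by norm_num) (fun u => 1/2 - u) _ c (by fun_prop) (by fun_prop) hdp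
    rw [int8] at this
    exact this
  have cont : ∀ c, Continuous fun x =>
      ∫ u in (0:ℝ)..(1/2), (1/2 - u) * (deriv g (x + c * u)) ^ 2 := fun c => by
    apply intervalIntegral.continuous_parametric_intervalIntegral_of_continuous'
    fun_prop
  have c1 := cont (-h)
  have c2 := cont h
  calc _ ≤ ∫ x in (0:ℝ)..ℓ, h ^ 2 / 4 * ((∫ u in (0:ℝ)..(1/2), (1/2 - u) * (deriv g (x + (-h) * u)) ^ 2) + ∫ u in (0:ℝ)..(1/2), (1/2 - u) * (deriv g (x + h * u)) ^ 2) := by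
        apply intervalIntegral.integral_mono_on hℓ.le
        · exact Continuous.intervalIntegrable (by fun_prop) _ _
        · exact Continuous.intervalIntegrable (by fun_prop) _ _
        · intro x _
          rw [R_eq g hg]
          refine (wcs 0 (1/2) (by norm_num) (fun u => 1/2 - u) _ (by fun_prop) (by fun_prop)
            (fun u hu => by simpa using hu.2) (1/8) int8 (by norm_num)).trans ?_
          rw [← intervalIntegral.integral_add, ← intervalIntegral.integral_const_mul,
            ← intervalIntegral.integral_const_mul]
          · apply intervalIntegral.integral_mono_on (by norm_num)
            · exact Continuous.intervalIntegrable (by fun_prop) _ _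
            · exact Continuous.intervalIntegrable (by fun_prop) _ _
            · intro u hu
              have h0 : 0 ≤ 1/2 - u := by simpa using hu.2
              set A := deriv g (x + -h * u)
              set B := deriv g (x + h * u)
              have : 0 ≤ (1/2 - u) * (h ^ 2 * (A + B) ^ 2) := by positivity
              nlinarith
          all_goals exact Continuous.intervalIntegrable (by fun_prop) _ _
    _ = _ := by
        rw [intervalIntegral.integral_const_mul, intervalIntegral.integral_add, key, key]
        · ring
        all_goals exact Continuous.intervalIntegrable (by fun_prop) _ _

theorem bessel (ℓ : ℝ) (hℓ : 0 < ℓ) (m : ℕ) (g : Fin m → ℝ → ℝ) (hg : ∀ j, Continuous (g j))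
    (hp : ∀ j, Function.Periodic (g j) ℓ)
    (ho : ∀ i j, ∫ x in (0:ℝ)..ℓ, g i x * g j x = if i = j then 1 else 0)
    (h : ℝ) (h0 : 0 < h) (h1 : h ≤ ℓ) (x : ℝ) : ∑ j, av (g j) h x ^ 2 ≤ 1 / h := by
  set s := ∑ j, av (g j) h x ^ 2 with hs
  set S : ℝ → ℝ := fun y => ∑ j, av (g j) h x * g j y with hS
  have hSc : Continuous S := by fun_prop
  have hav : ∀ j, ∫ y in (x - h/2)..(x + h/2), g j y = h * av (g j) h x := fun j => by
    unfold av
    have := intervalIntegral.integral_comp_add_mul (a := -(1/2)) (b := 1/2) (g j) h0.ne' x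
    rw [this, smul_eq_mul, mul_inv_cancel_left₀ h0.ne']
    congr 1 <;> ring
  have i1 : ∫ y in (x - h/2)..(x + h/2), S y = h * s := by
    simp only [hS]
    rw [intervalIntegral.integral_finsetSum]
    · simp_rw [intervalIntegral.integral_const_mul, hav]
      rw [hs, Finset.mul_sum]
      exact Finset.sum_congr rfl fun j _ => by ring
    · exact fun j _ => Continuous.intervalIntegrable (by fun_prop) _ _
  have hSp : Function.Periodic (fun y => S y ^ 2) ℓ := fun y => by
    simp only [hS]; simp_rw [fun j => hp j y]
  have i2 : ∫ y in (x - ℓ/2)..(x + ℓ/2), S y ^ 2 = s := by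
    have := hSp.intervalIntegral_add_eq (x - ℓ/2) 0
    rw [show x - ℓ/2 + ℓ = x + ℓ/2 by ring, zero_add] at this
    rw [this]
    simp only [hS, pow_two, Finset.sum_mul_sum]
    rw [intervalIntegral.integral_finsetSum]
    · rw [hs]
      refine Finset.sum_congr rfl fun i _ => ?_
      rw [intervalIntegral.integral_finsetSum]
      · have : ∀ j, ∫ y in (0:ℝ)..ℓ, av (g i) h x * g i y * (av (g j) h x * g j y)
            = av (g i) h x * av (g j) h x * (if i = j then 1 else 0) := fun j => by
          rw [← ho i j, ← intervalIntegral.integral_const_mul]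
          congr 1; ext y; ring
        simp_rw [this]
        simp [pow_two]
      · exact fun j _ => Continuous.intervalIntegrable (by fun_prop) _ _
    · exact fun j _ => Continuous.intervalIntegrable (by fun_prop) _ _
  have i3 : ∫ y in (x - h/2)..(x + h/2), S y ^ 2 ≤ s := by
    rw [← i2]
    apply intervalIntegral.integral_mono_interval (by linarith) (by linarith) (by linarith)
    · exact Filter.Eventually.of_forall fun y => sq_nonneg _
    · exact Continuous.intervalIntegrable (by fun_prop) _ _
  have i4 := wcs (x - h/2) (x + h/2) (by linarith) (fun _ => 1) S (by fun_prop) hSc (by simp) h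
    (by simp) h0
  simp only [one_mul] at i4
  rw [i1] at i4
  have hs0 : 0 ≤ s := Finset.sum_nonneg fun j _ => sq_nonneg _
  rw [le_div_iff₀ h0]
  by_contra hc
  push Not at hc
  have : 0 < s := by
    rcases hs0.eq_or_lt with h | h
    · rw [← h] at hc; norm_num at hc
    · exact h
  have h5 : (h * s) ^ 2 ≤ h * s := i4.trans (mul_le_mul_of_nonneg_left i3 h0.le)
  nlinarith

theorem av_ell (ℓ : ℝ) (hℓ : 0 < ℓ) (g : ℝ → ℝ) (hp : Function.Periodic g ℓ)
    (hm : ∫ x in (0:ℝ)..ℓ, g x = 0) (x : ℝ) : av g ℓ x = 0 := by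
  unfold av
  rw [intervalIntegral.integral_comp_add_mul (a := -(1/2)) (b := 1/2) g hℓ.ne' x]
  have := hp.intervalIntegral_add_eq (x + ℓ * -(1/2)) 0
  rw [zero_add, hm, show x + ℓ * -(1/2) + ℓ = x + ℓ * (1/2) by ring] at this
  rw [this, smul_zero]

noncomputable def hh (ℓ e : ℝ) : ℝ := 1 / max (e ^ 2) (1 / ℓ)

theorem hh_cont (ℓ : ℝ) (hℓ : 0 < ℓ) : Continuous (hh ℓ) := by
  unfold hh
  apply Continuous.div continuous_const (by fun_prop)
  intro e
  have : 0 < 1 / ℓ := by positivity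
  exact (lt_max_of_lt_right this).ne'

theorem av_le (ℓ : ℝ) (hℓ : 0 < ℓ) (m : ℕ) (g : Fin m → ℝ → ℝ) (hg : ∀ j, Continuous (g j))
    (hp : ∀ j, Function.Periodic (g j) ℓ)
    (hm : ∀ j, ∫ x in (0:ℝ)..ℓ, g j x = 0)
    (ho : ∀ i j, ∫ x in (0:ℝ)..ℓ, g i x * g j x = if i = j then 1 else 0)
    (e x : ℝ) : ∑ j, av (g j) (hh ℓ e) x ^ 2 ≤ e ^ 2 := by
  have hl : 0 < 1 / ℓ := by positivity
  rcases le_total (1 / ℓ) (e ^ 2) with h | h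
  · have e0 : 0 < e ^ 2 := hl.trans_le h
    have : hh ℓ e = 1 / e ^ 2 := by rw [hh, max_eq_left h]
    rw [this]
    refine (bessel ℓ hℓ m g hg hp ho (1 / e ^ 2) (by positivity) ?_ x).trans (by simp)
    rw [div_le_iff₀ hℓ] at h
    rw [div_le_iff₀ e0]; linarith
  · have : hh ℓ e = ℓ := by rw [hh, max_eq_right h, one_div_one_div]
    rw [this]
    simp_rw [fun j => av_ell ℓ hℓ (g j) (hp j) (hm j) x]
    simpa using sq_nonneg e

theorem lower (m : ℕ) (g a : Fin m → ℝ) (r e : ℝ) (hr : 0 ≤ r) (hg : ∑ j, g j ^ 2 = r ^ 2)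
    (he : e ≤ r) (he0 : 0 ≤ e) (ha : ∑ j, a j ^ 2 ≤ e ^ 2) :
    (r - e) ^ 2 ≤ ∑ j, (g j - a j) ^ 2 := by
  have h1 := Real.sum_mul_le_sqrt_mul_sqrt Finset.univ g a
  rw [hg, Real.sqrt_sq hr] at h1
  set t := √(∑ j, a j ^ 2) with ht
  have t0 : 0 ≤ t := Real.sqrt_nonneg _
  have t1 : t ≤ e := by rw [ht]; exact Real.sqrt_le_iff.2 ⟨he0, ha⟩
  have t2 : t ^ 2 = ∑ j, a j ^ 2 := Real.sq_sqrt (Finset.sum_nonneg fun j _ => sq_nonneg _)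
  have : ∑ j, (g j - a j) ^ 2 = r ^ 2 - 2 * ∑ j, g j * a j + t ^ 2 := by
    rw [← hg, t2, Finset.mul_sum, ← Finset.sum_sub_distrib, ← Finset.sum_add_distrib]
    exact Finset.sum_congr rfl fun j _ => by ring
  rw [this]
  nlinarith

theorem poly6 (r : ℝ) : ∫ e in (0:ℝ)..r, 2 * e * (r - e) ^ 2 = r ^ 4 / 6 := by
  have : ∀ e ∈ Set.uIcc 0 r, HasDerivAt (fun e : ℝ => r ^ 2 * e ^ 2 - 4 / 3 * r * e ^ 3 + e ^ 4 / 2)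
      (2 * e * (r - e) ^ 2) e := fun e _ => by
    have := (((hasDerivAt_pow 2 e).const_mul (r ^ 2)).sub
      ((hasDerivAt_pow 3 e).const_mul (4 / 3 * r))).add ((hasDerivAt_pow 4 e).div_const 2)
    refine this.congr_deriv ?_
    norm_num
    ring
  rw [intervalIntegral.integral_eq_sub_of_hasDerivAt this
    (Continuous.intervalIntegrable (by fun_prop) _ _)]
  ring

theorem upper (G M : ℝ) (hG : 0 ≤ G) (hM : 0 ≤ M) (F : ℝ → ℝ) (hF : Continuous F)
    (h4 : ∀ e, F e ≤ 4) (hFG : ∀ e, 0 < e → F e ≤ G ^ 2 / (16 * e ^ 4)) :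
    ∫ e in (0:ℝ)..M, 2 * e * F e ≤ G := by
  rcases hG.eq_or_lt with h | hG
  · rw [← h]
    have : ∫ e in (0:ℝ)..M, 2 * e * F e ≤ ∫ e in (0:ℝ)..M, (0:ℝ) := by
      apply intervalIntegral.integral_mono_on hM
      · exact Continuous.intervalIntegrable (by fun_prop) _ _
      · simp
      · intro e he
        rcases he.1.eq_or_lt with h' | h'
        · simp [← h']
        · have := hFG e h'
          rw [← h] at this
          simp at this
          nlinarith
    simpa using this
  have first : ∀ T, 0 ≤ T → ∫ e in (0:ℝ)..T, 2 * e * F e ≤ 4 * T ^ 2 := fun T hT => by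
    have : ∫ e in (0:ℝ)..T, 2 * e * F e ≤ ∫ e in (0:ℝ)..T, 8 * e := by
      apply intervalIntegral.integral_mono_on hT
      · exact Continuous.intervalIntegrable (by fun_prop) _ _
      · exact Continuous.intervalIntegrable (by fun_prop) _ _
      · intro e he
        nlinarith [h4 e, he.1]
    rw [intervalIntegral.integral_const_mul, integral_id] at this
    linarith
  set T := √(G / 8) with hT
  have T2 : T ^ 2 = G / 8 := Real.sq_sqrt (by positivity)
  have T0 : 0 < T := Real.sqrt_pos.2 (by positivity)
  rcases le_total M T with h | h
  · have := first M hM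
    nlinarith
  · rw [← intervalIntegral.integral_add_adjacent_intervals (b := T)]
    · have h1 := first T T0.le
      have hd : ∀ e ∈ Set.uIcc T M, HasDerivAt (fun e : ℝ => -(G ^ 2 / 16) * (e ^ 2)⁻¹)
          (2 * e * (G ^ 2 / (16 * e ^ 4))) e := fun e he => by
        rw [Set.uIcc_of_le h] at he
        have e0 : 0 < e := T0.trans_le he.1
        have := ((hasDerivAt_pow 2 e).inv (by positivity)).const_mul (-(G ^ 2 / 16))
        refine this.congr_deriv ?_
        norm_num
        field_simp
        try norm_num
      have hi : IntervalIntegrable (fun e : ℝ => 2 * e * (G ^ 2 / (16 * e ^ 4))) volume T M := by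
        apply ContinuousOn.intervalIntegrable
        rw [Set.uIcc_of_le h]
        apply ContinuousOn.mul (by fun_prop)
        apply ContinuousOn.div (by fun_prop) (by fun_prop)
        intro e he
        have e0 : 0 < e := T0.trans_le he.1
        positivity
      have h2 : ∫ e in T..M, 2 * e * F e ≤ ∫ e in T..M, 2 * e * (G ^ 2 / (16 * e ^ 4)) := by
        apply intervalIntegral.integral_mono_on h
        · exact Continuous.intervalIntegrable (by fun_prop) _ _
        · exact hi
        · intro e he
          have e0 : 0 < e := T0.trans_le he.1
          exact mul_le_mul_of_nonneg_left (hFG e e0) (by positivity)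
      rw [intervalIntegral.integral_eq_sub_of_hasDerivAt hd hi, T2] at h2
      have h3 : 0 ≤ G ^ 2 / 16 * (M ^ 2)⁻¹ := by positivity
      have h4 : G ^ 2 / 16 * (G / 8)⁻¹ = G / 2 := by field_simp; norm_num
      nlinarith
    all_goals exact Continuous.intervalIntegrable (by fun_prop) _ _

theorem oneD (ℓ : ℝ) (hℓ : 0 < ℓ) (m : ℕ) (g : Fin m → ℝ → ℝ) (hg : ∀ j, ContDiff ℝ 1 (g j))
    (hp : ∀ j, Function.Periodic (g j) ℓ)
    (hm : ∀ j, ∫ x in (0:ℝ)..ℓ, g j x = 0)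
    (ho : ∀ i j, ∫ x in (0:ℝ)..ℓ, g i x * g j x = if i = j then 1 else 0) :
    ∫ x in (0:ℝ)..ℓ, (∑ j, g j x ^ 2) ^ 2 ≤ 6 * ∑ j, √(∫ x in (0:ℝ)..ℓ, deriv (g j) x ^ 2) := by
  have hgc : ∀ j, Continuous (g j) := fun j => (hg j).continuous
  have hhc := hh_cont ℓ hℓ
  have hac := fun j => av_cont (g j) (hgc j)
  have hRc : ∀ j, Continuous fun p : ℝ × ℝ => av (g j) (hh ℓ p.2) p.1 := fun j =>
    (hac j).comp (by fun_prop : Continuous fun p : ℝ × ℝ => (hh ℓ p.2, p.1))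
  have hRx : ∀ j e, Continuous fun x => av (g j) (hh ℓ e) x := fun j e =>
    (hRc j).comp (by fun_prop : Continuous fun x : ℝ => (x, e))
  have hRe : ∀ j x, Continuous fun e => av (g j) (hh ℓ e) x := fun j x =>
    (hRc j).comp (by fun_prop : Continuous fun e : ℝ => (x, e))
  obtain ⟨M0, hM0⟩ := (isCompact_Icc (a := (0:ℝ)) (b := ℓ)).bddAbove_image
    (f := fun x => √(∑ j, g j x ^ 2)) (Continuous.continuousOn (by fun_prop))
  set M := max M0 0
  have hM : 0 ≤ M := le_max_right _ _
  have hMx : ∀ x ∈ Set.Icc 0 ℓ, √(∑ j, g j x ^ 2) ≤ M := fun x hx =>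
    (hM0 (Set.mem_image_of_mem _ hx)).trans (le_max_left _ _)
  have pt : ∀ x ∈ Set.Icc 0 ℓ, (∑ j, g j x ^ 2) ^ 2 / 6
      ≤ ∫ e in (0:ℝ)..M, ∑ j, 2 * e * (g j x - av (g j) (hh ℓ e) x) ^ 2 := fun x hx => by
    set r := √(∑ j, g j x ^ 2) with hr
    have r2 : ∑ j, g j x ^ 2 = r ^ 2 :=
      (Real.sq_sqrt (Finset.sum_nonneg fun j _ => sq_nonneg _)).symm
    have r0 : 0 ≤ r := Real.sqrt_nonneg _
    have cE : Continuous fun e => ∑ j, 2 * e * (g j x - av (g j) (hh ℓ e) x) ^ 2 := by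
      have := fun j => hRe j x
      fun_prop
    calc _ = ∫ e in (0:ℝ)..r, 2 * e * (r - e) ^ 2 := by rw [poly6, r2]; ring
      _ ≤ ∫ e in (0:ℝ)..r, ∑ j, 2 * e * (g j x - av (g j) (hh ℓ e) x) ^ 2 := by
        apply intervalIntegral.integral_mono_on r0
        · exact Continuous.intervalIntegrable (by fun_prop) _ _
        · exact cE.intervalIntegrable _ _
        · intro e he
          rw [← Finset.mul_sum]
          exact mul_le_mul_of_nonneg_left (lower m _ _ r e r0 r2 he.2 he.1
            (av_le ℓ hℓ m g hgc hp hm ho e x)) (by linarith [he.1])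
      _ ≤ _ := by
        apply intervalIntegral.integral_mono_interval le_rfl r0 (hMx x hx)
        · refine (ae_restrict_iff' measurableSet_Ioc).2 (Filter.Eventually.of_forall fun e he => ?_)
          exact Finset.sum_nonneg fun j _ => mul_nonneg (by linarith [he.1]) (sq_nonneg _)
        · exact cE.intervalIntegrable _ _
  have cH : Continuous (Function.uncurry fun x e => ∑ j, 2 * e * (g j x - av (g j) (hh ℓ e) x) ^ 2) := by
    simp only [Function.uncurry_def]
    fun_prop
  have step1 : ∫ x in (0:ℝ)..ℓ, (∑ j, g j x ^ 2) ^ 2 / 6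
      ≤ ∫ x in (0:ℝ)..ℓ, ∫ e in (0:ℝ)..M, ∑ j, 2 * e * (g j x - av (g j) (hh ℓ e) x) ^ 2 := by
    apply intervalIntegral.integral_mono_on hℓ.le
    · exact Continuous.intervalIntegrable (by fun_prop) _ _
    · exact (intervalIntegral.continuous_parametric_intervalIntegral_of_continuous' cH
        0 M).intervalIntegrable _ _
    · exact pt
  rw [swapc 0 ℓ 0 M hℓ.le hM _ cH] at step1
  have cF : ∀ j, Continuous fun e => ∫ x in (0:ℝ)..ℓ, (g j x - av (g j) (hh ℓ e) x) ^ 2 := fun j => by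
    apply intervalIntegral.continuous_parametric_intervalIntegral_of_continuous'
    simp only [Function.uncurry_def]
    have : Continuous fun p : ℝ × ℝ => av (g j) (hh ℓ p.1) p.2 :=
      (hRc j).comp (by fun_prop : Continuous fun p : ℝ × ℝ => (p.2, p.1))
    fun_prop
  have step2 : ∫ e in (0:ℝ)..M, ∫ x in (0:ℝ)..ℓ, ∑ j, 2 * e * (g j x - av (g j) (hh ℓ e) x) ^ 2
      = ∑ j, ∫ e in (0:ℝ)..M, 2 * e * ∫ x in (0:ℝ)..ℓ, (g j x - av (g j) (hh ℓ e) x) ^ 2 := by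
    rw [← intervalIntegral.integral_finsetSum]
    · congr 1; ext e
      have := fun j => hRx j e
      rw [intervalIntegral.integral_finsetSum]
      · simp_rw [intervalIntegral.integral_const_mul]
      · exact fun j _ => Continuous.intervalIntegrable (by fun_prop) _ _
    · exact fun j _ => Continuous.intervalIntegrable (by have := cF j; fun_prop) _ _
  rw [step2, intervalIntegral.integral_div] at step1
  have step3 : ∀ j, ∫ e in (0:ℝ)..M, 2 * e * ∫ x in (0:ℝ)..ℓ, (g j x - av (g j) (hh ℓ e) x) ^ 2
      ≤ √(∫ x in (0:ℝ)..ℓ, deriv (g j) x ^ 2) := fun j => by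
    have hD : 0 ≤ ∫ x in (0:ℝ)..ℓ, deriv (g j) x ^ 2 :=
      intervalIntegral.integral_nonneg hℓ.le fun _ _ => sq_nonneg _
    apply upper _ M (Real.sqrt_nonneg _) hM _ (cF j)
    · intro e
      apply bd4 ℓ hℓ _ (hgc j) (hp j)
      simpa [pow_two] using ho j j
    · intro e he
      refine (bdG ℓ hℓ _ (hg j) (hp j) _).trans ?_
      rw [Real.sq_sqrt hD]
      have hb : hh ℓ e ≤ 1 / e ^ 2 := by
        unfold hh
        exact one_div_le_one_div_of_le (by positivity) (le_max_left _ _)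
      have hb0 : 0 ≤ hh ℓ e := by unfold hh; positivity
      have hb2 : hh ℓ e ^ 2 ≤ (1 / e ^ 2) ^ 2 := by gcongr
      calc _ ≤ (1 / e ^ 2) ^ 2 / 16 * ∫ x in (0:ℝ)..ℓ, deriv (g j) x ^ 2 := by gcongr
        _ = _ := by field_simp
  have := Finset.sum_le_sum fun j (_ : j ∈ Finset.univ) => step3 j
  linarith

theorem stmt_19 (L α : ℝ) (hL : 0 < L) (hα0 : 0 < α) (hα1 : α ≤ 1)
    (m : ℕ) (w : Fin m → ℝ × ℝ → ℝ × ℝ)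
    (hC1 : ∀ j, ContDiff ℝ 1 (w j))
    (hper1 : ∀ j (x : ℝ × ℝ), w j (x.1 + L / α, x.2) = w j x)
    (hper2 : ∀ j (x : ℝ × ℝ), w j (x.1, x.2 + L) = w j x)
    (hx1only : ∀ j (x y : ℝ × ℝ), x.1 = y.1 → w j x = w j y)
    (hdiv : ∀ j x, pd1 (fun y => (w j y).1) x + pd2 (fun y => (w j y).2) x = 0)
    (hmean : ∀ j, (∫ x in Set.Ioc (0:ℝ) (L / α) ×ˢ Set.Ioc (0:ℝ) L, w j x) = 0)
    (hortho : ∀ i j, (∫ x in Set.Ioc (0:ℝ) (L / α) ×ˢ Set.Ioc (0:ℝ) L,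
        ((w i x).1 * (w j x).1 + (w i x).2 * (w j x).2)) = if i = j then 1 else 0) :
    (∫ x in Set.Ioc (0:ℝ) (L / α) ×ˢ Set.Ioc (0:ℝ) L,
        (∑ j, ((w j x).1 ^ 2 + (w j x).2 ^ 2)) ^ 2) ≤
      (6 / L) * ∑ j, Real.sqrt
        (∫ x in Set.Ioc (0:ℝ) (L / α) ×ˢ Set.Ioc (0:ℝ) L, gradSq (w j) x) := by
  have hℓ : 0 < L / α := by positivity
  set ℓ := L / α with hℓd
  have red : ∀ φ : ℝ → ℝ, ∫ x in Set.Ioc (0:ℝ) ℓ ×ˢ Set.Ioc (0:ℝ) L, φ x.1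
      = L * ∫ s in (0:ℝ)..ℓ, φ s := fun φ => by
    rw [Measure.volume_eq_prod, ← Measure.prod_restrict, integral_fun_fst,
      intervalIntegral.integral_of_le hℓ.le]
    simp [Measure.real, hL.le]
  have hint : ∀ j, IntegrableOn (w j) (Set.Ioc (0:ℝ) ℓ ×ˢ Set.Ioc (0:ℝ) L) := fun j => by
    have h1 : IntegrableOn (w j) (Set.Icc (0:ℝ) ℓ ×ˢ Set.Icc (0:ℝ) L) :=
      (hC1 j).continuous.continuousOn.integrableOn_compact (isCompact_Icc.prod isCompact_Icc)
    exact h1.mono_set (Set.prod_mono Set.Ioc_subset_Icc_self Set.Ioc_subset_Icc_self)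
  have hx : ∀ j x, w j x = w j (x.1, 0) := fun j x => hx1only j x (x.1, 0) rfl
  set f : Fin m → ℝ → ℝ := fun j s => (w j (s, 0)).2 with hf
  have hline : ∀ j, ContDiff ℝ 1 fun s : ℝ => w j (s, 0) := fun j =>
    (hC1 j).comp (contDiff_id.prodMk contDiff_const)
  have hf1 : ∀ j, ContDiff ℝ 1 (f j) := fun j => contDiff_snd.comp (hline j)
  have hu1 : ∀ j, ContDiff ℝ 1 fun s : ℝ => (w j (s, 0)).1 := fun j => contDiff_fst.comp (hline j)
  have hz2 : ∀ j x, pd2 (fun y => (w j y).2) x = 0 := fun j x => by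
    unfold pd2
    have : (fun t => (w j (x.1, t)).2) = fun _ => (w j (x.1, 0)).2 := by
      ext t; rw [hx j (x.1, t)]
    rw [this, deriv_const]
  have hu0 : ∀ j s, (w j (s, 0)).1 = 0 := fun j => by
    have hc : ∀ s, (w j (s, 0)).1 = (w j (0, 0)).1 := fun s =>
      is_const_of_deriv_eq_zero (f := fun s : ℝ => (w j (s, 0)).1)
        ((hu1 j).differentiable one_ne_zero)
        (fun s => by
          have := hdiv j (s, 0)
          rw [hz2, add_zero] at this
          exact this) s 0
    have h1 := congrArg Prod.fst (hmean j)
    rw [fst_integral (hint j)] at h1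
    have h2 : ∀ x, (w j x).1 = (w j (0, 0)).1 := fun x => by rw [hx j x, hc]
    simp_rw [h2] at h1
    rw [red (fun _ => (w j (0, 0)).1)] at h1
    simp [hL.ne', hℓ.ne'] at h1
    intro s
    rw [hc, h1]
  have hw1 : ∀ j x, (w j x).1 = 0 := fun j x => by rw [hx, hu0]
  have hw2 : ∀ j x, (w j x).2 = f j x.1 := fun j x => by rw [hx]
  have hgrad : ∀ j x, gradSq (w j) x = deriv (f j) x.1 ^ 2 := fun j x => by
    unfold gradSq
    rw [hz2]
    simp only [hw1, hw2, pd1, pd2]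
    simp
  simp only [hgrad, hw1, hw2]
  simp only [hw1, hw2] at hortho
  have hm2 : ∀ j, ∫ s in (0:ℝ)..ℓ, f j s = 0 := fun j => by
    have h1 := congrArg Prod.snd (hmean j)
    rw [snd_integral (hint j)] at h1
    simp_rw [hw2] at h1
    rw [red (f j)] at h1
    simpa [hL.ne'] using h1
  have ho2 : ∀ i j, L * ∫ s in (0:ℝ)..ℓ, f i s * f j s = if i = j then 1 else 0 := fun i j => by
    rw [← hortho i j, ← red fun s => f i s * f j s]
    simp
  have hfd : ∀ j, Differentiable ℝ (f j) := fun j => (hf1 j).differentiable one_ne_zero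
  have key := oneD ℓ hℓ m (fun j s => √L * f j s) (fun j => contDiff_const.mul (hf1 j))
    (fun j s => by
      have := hper1 j (s, 0)
      simp only [hf]
      simp only at this
      rw [this])
    (fun j => by rw [intervalIntegral.integral_const_mul, hm2, mul_zero])
    (fun i j => by
      rw [← ho2 i j, ← intervalIntegral.integral_const_mul]
      congr 1; ext s
      have := Real.mul_self_sqrt hL.le
      linear_combination (f i s * f j s) * this)
  have hs2 : √L ^ 2 = L := Real.sq_sqrt hL.le
  have hder : ∀ j s, deriv (fun s => √L * f j s) s = √L * deriv (f j) s := fun j s =>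
    deriv_const_mul _ (hfd j s)
  simp only [hder, mul_pow, hs2, ← Finset.mul_sum, intervalIntegral.integral_const_mul] at key
  rw [red (fun s => (∑ j, (0 ^ 2 + f j s ^ 2)) ^ 2)]
  simp_rw [fun j => red (fun s => deriv (f j) s ^ 2)]
  simp only [ne_eq, OfNat.ofNat_ne_zero, not_false_eq_true, zero_pow, zero_add]
  rw [div_mul_eq_mul_div, le_div_iff₀ hL]
  linarith
end
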